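/- arXiv:2204.11468 — 2 statements merged into one kernel-verified Lean document; each statement's English description precedes it below -/
import Mathlib

section
/- Let d ≥ 1 be an integer, t > 0 and x ∈ ℝ^d. For every s > 0 and every positive integer n, let u_{s,n} be a mild solution of ∂_t u = (1/2)Δu - u² with initial data n·1_{B(s)}. Then lim_{s→∞} sup_{n ≥ 1} u_{s,n}(t,x) = 1/t. -/
/-!
The spatially constant solution started from `n` is `v(t) = n / (1 + n t)`, which increases to
`1 / t` as `n → ∞`; the point is that `u_{s,n}` lies below `v` and converges to it as `s → ∞`.

*Upper bound* (`mild_le`). Fix `t`, `x` and put `F(s) = P_s u(t-s)(x)`, with `P_s` the heat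
semigroup. By the Chapman–Kolmogorov identity (`heatKernel_comp`) the mild equation reads
`F(s) = F(0) + ∫₀ˢ P_r(u(t-r)²)(x) dr`, with `F(0) = u(t,x)` and `F(t) = P_t φ(x) ≤ n`.
Jensen's inequality bounds the integrand below by `F²`, so `1/F` decreases at rate at least one
(`riccati_bound`), which gives `1/u(t,x) ≥ t + 1/n`. Neither uniqueness of solutions nor a maximum
principle is needed.

*Lower bound* (`le_mild`). Inserting `u ≤ v` into the absorption term of the mild equation gives
`u(t,x) ≥ P_t φ(x) - ∫₀ᵗ v² = P_t φ(x) - n + v(t)`, and `P_t φ(x) → n` as the ball exhausts the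
space (`tendsto_heat_ball`).

Hence the supremum over `n` is at most `1/t` for every `s`, and its lower limit as `s → ∞` is at
least `n / (1 + n t)` for each `n`.
-/

open MeasureTheory Filter Set Metric
open scoped ENNReal

/-- The `d`-dimensional heat kernel `p_t(x,y) = (2πt)^{-d/2} exp(-‖x-y‖²/(2t))`. -/
noncomputable def heatKernel (d : ℕ) (t : ℝ) (x y : EuclideanSpace ℝ (Fin d)) : ℝ :=
  (2 * Real.pi * t) ^ (-(d : ℝ) / 2) * Real.exp (-‖x - y‖ ^ 2 / (2 * t))

/-- `u : (0,∞) × ℝ^d → [0,∞)` is a mild solution of `∂ₜu = (1/2)Δu - u²` with initial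
data `φ` if it is measurable, nonnegative, and satisfies for all `t > 0`, `x ∈ ℝ^d`:
`u(t,x) + ∫₀ᵗ ∫ p_s(x,y) u(t-s,y)² dy ds = ∫ p_t(x,y) φ(y) dy` (equality in `[0,∞]`). -/
def IsMildSolution (d : ℕ) (φ : EuclideanSpace ℝ (Fin d) → ℝ)
    (u : ℝ → EuclideanSpace ℝ (Fin d) → ℝ) : Prop :=
  Measurable (Function.uncurry u) ∧
  (∀ t x, 0 ≤ u t x) ∧
  ∀ t x, 0 < t →
    ENNReal.ofReal (u t x) +
        (∫⁻ s in Set.Ioo (0 : ℝ) t, ∫⁻ y,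
          ENNReal.ofReal (heatKernel d s x y * u (t - s) y ^ 2)) =
      ∫⁻ y, ENNReal.ofReal (heatKernel d t x y * φ y)

/-! ### A Riccati inequality -/

/-- Riccati comparison: if `F(s) = c₀ + ∫₀ˢ g` satisfies `F² ≤ g = F'` almost
everywhere on `(0,t)`, then `1/F` drops by at least `t` over `[0,t]`. -/
lemma riccati_bound {g : ℝ → ℝ} (hg : Integrable g) {c₀ c t : ℝ} (ht : 0 < t) (hc₀ : 0 < c₀)
    (h : ∀ᵐ s, s ∈ Ioo 0 t → (c₀ + ∫ r in (0 : ℝ)..s, g r) ^ 2 ≤ g s)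
    (hc : c₀ + ∫ r in (0 : ℝ)..t, g r ≤ c) : t + 1 / c ≤ 1 / c₀ := by
  set F : ℝ → ℝ := fun s => c₀ + ∫ r in (0 : ℝ)..s, g r with hF
  have hFc : Continuous F :=
    continuous_const.add (intervalIntegral.continuous_primitive
      (fun a b => hg.intervalIntegrable) 0)
  have hF2c : Continuous fun s => F s ^ 2 := hFc.pow 2
  -- `H` is a `C¹` minorant of `F` for which differentiation needs no almost-everywhere care.
  set H : ℝ → ℝ := fun s => c₀ + ∫ r in (0 : ℝ)..s, F r ^ 2 with hH
  have hHd : ∀ s, HasDerivAt H (F s ^ 2) s := fun s =>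
    (intervalIntegral.integral_hasDerivAt_right (hF2c.intervalIntegrable _ _)
      (hF2c.stronglyMeasurableAtFilter _ _) hF2c.continuousAt).const_add c₀
  have hHpos : ∀ s, 0 ≤ s → c₀ ≤ H s := fun s hs => by
    have := intervalIntegral.integral_nonneg (μ := volume) (f := fun r => F r ^ 2) hs
      (fun r _ => sq_nonneg _)
    simp only [hH]; linarith
  have hHF : ∀ s, 0 ≤ s → s ≤ t → H s ≤ F s := fun s hs hst => by
    simp only [hH, hF]
    gcongr
    rw [intervalIntegral.integral_of_le hs, intervalIntegral.integral_of_le hs,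
      integral_Ioc_eq_integral_Ioo, integral_Ioc_eq_integral_Ioo]
    refine setIntegral_mono_on_ae ?_ hg.integrableOn measurableSet_Ioo ?_
    · exact (hF2c.integrableOn_Icc (a := 0) (b := s)).mono_set Ioo_subset_Icc_self
    · filter_upwards [h] with r hr hr'
      exact hr ⟨hr'.1, hr'.2.trans_le hst⟩
  have hd : ∀ s, 0 ≤ s → HasDerivAt (fun s => -(H s)⁻¹) (F s ^ 2 / H s ^ 2) s := fun s hs => by
    have := ((hHd s).inv (by linarith [hHpos s hs])).neg
    exact this.congr_deriv (by ring)
  have key := (convex_Icc (0 : ℝ) t).mul_sub_le_image_sub_of_le_deriv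
    (f := fun s => -(H s)⁻¹) (C := 1)
    (fun s hs => (hd s hs.1).continuousAt.continuousWithinAt)
    (fun s hs => by
      rw [interior_Icc] at hs
      exact (hd s hs.1.le).differentiableAt.differentiableWithinAt)
    (fun s hs => by
      rw [interior_Icc] at hs
      have h1 := hHpos s hs.1.le
      have h2 := hHF s hs.1.le hs.2.le
      have h3 : 0 < H s := hc₀.trans_le h1
      rw [(hd s hs.1.le).deriv, one_le_div (by positivity)]
      gcongr) 0 ⟨le_rfl, ht.le⟩ t ⟨ht.le, le_rfl⟩ ht.le
  have hH0 : H 0 = c₀ := by simp [hH]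
  have h1 : (1 : ℝ) / c ≤ (H t)⁻¹ := by
    rw [one_div]
    have := hHpos t ht.le
    exact inv_anti₀ (by linarith) ((hHF t ht.le le_rfl).trans hc)
  simp only [hH0] at key
  rw [one_div c₀]
  linarith

/-! ### The heat semigroup -/

section Heat

variable {d : ℕ}

lemma heatKernel_nonneg {t : ℝ} (ht : 0 ≤ t) (x y : EuclideanSpace ℝ (Fin d)) :
    0 ≤ heatKernel d t x y := by
  unfold heatKernel
  positivity

lemma measurable_heatKernel {α : Type*} [MeasurableSpace α] {s : α → ℝ}
    {x y : α → EuclideanSpace ℝ (Fin d)} (hs : Measurable s) (hx : Measurable x)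
    (hy : Measurable y) : Measurable fun a => ENNReal.ofReal (heatKernel d (s a) (x a) (y a)) := by
  unfold heatKernel
  fun_prop

lemma measurable_heatKernel_right (t : ℝ) (x : EuclideanSpace ℝ (Fin d)) :
    Measurable fun y => ENNReal.ofReal (heatKernel d t x y) :=
  measurable_heatKernel measurable_const measurable_const measurable_id

lemma lintegral_gaussian {b : ℝ} (hb : 0 < b) (m : EuclideanSpace ℝ (Fin d)) :
    ∫⁻ y, ENNReal.ofReal (Real.exp (-b * ‖y - m‖ ^ 2)) =
      ENNReal.ofReal ((Real.pi / b) ^ ((d : ℝ) / 2)) := by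
  rw [lintegral_sub_right_eq_self
    (fun y : EuclideanSpace ℝ (Fin d) => ENNReal.ofReal (Real.exp (-b * ‖y‖ ^ 2))) m]
  have h := GaussianFourier.integral_rexp_neg_mul_sq_norm (V := EuclideanSpace ℝ (Fin d)) hb
  rw [finrank_euclideanSpace_fin] at h
  rw [← h, ofReal_integral_eq_lintegral_ofReal]
  · by_contra hi
    rw [integral_undef hi] at h
    have : 0 < (Real.pi / b) ^ ((d : ℝ) / 2) := by positivity
    linarith
  · exact Eventually.of_forall fun y => (Real.exp_pos _).le

/-- Chapman–Kolmogorov, by completing the square in `y`. -/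
lemma heatKernel_comp {s r : ℝ} (hs : 0 < s) (hr : 0 < r) (x z : EuclideanSpace ℝ (Fin d)) :
    ∫⁻ y, ENNReal.ofReal (heatKernel d s x y) * ENNReal.ofReal (heatKernel d r y z) =
      ENNReal.ofReal (heatKernel d (s + r) x z) := by
  set m : EuclideanSpace ℝ (Fin d) := (r / (s + r)) • x + (s / (s + r)) • z with hm
  have hsr : s + r ≠ 0 := by positivity
  have key : ∀ y, ENNReal.ofReal (heatKernel d s x y) * ENNReal.ofReal (heatKernel d r y z) =
      ENNReal.ofReal ((2 * Real.pi * s) ^ (-(d : ℝ) / 2) * (2 * Real.pi * r) ^ (-(d : ℝ) / 2) *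
        Real.exp (-‖x - z‖ ^ 2 / (2 * (s + r)))) *
      ENNReal.ofReal (Real.exp (-((s + r) / (2 * s * r)) * ‖y - m‖ ^ 2)) := by
    intro y
    rw [← ENNReal.ofReal_mul (heatKernel_nonneg hs.le x y), ← ENNReal.ofReal_mul (by positivity)]
    congr 1
    unfold heatKernel
    have e1 : x - y = (s / (s + r)) • (x - z) - (y - m) := by
      have : (s / (s + r)) + (r / (s + r)) = 1 := by field_simp
      have h2 : x = (s / (s + r)) • x + (r / (s + r)) • x := by rw [← add_smul, this, one_smul]
      rw [hm]
      nth_rewrite 1 [h2]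
      module
    have e2 : y - z = (r / (s + r)) • (x - z) + (y - m) := by
      have : (s / (s + r)) + (r / (s + r)) = 1 := by field_simp
      have h2 : z = (s / (s + r)) • z + (r / (s + r)) • z := by rw [← add_smul, this, one_smul]
      rw [hm]
      nth_rewrite 1 [h2]
      module
    have hexp : -‖x - y‖ ^ 2 / (2 * s) + -‖y - z‖ ^ 2 / (2 * r) =
        -‖x - z‖ ^ 2 / (2 * (s + r)) + -((s + r) / (2 * s * r)) * ‖y - m‖ ^ 2 := by
      rw [e1, e2, norm_sub_sq_real, norm_add_sq_real, norm_smul, norm_smul, mul_pow, mul_pow,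
        real_inner_smul_left, real_inner_smul_left, Real.norm_eq_abs, Real.norm_eq_abs,
        sq_abs, sq_abs]
      field_simp
      ring
    calc _ = (2 * Real.pi * s) ^ (-(d : ℝ) / 2) * (2 * Real.pi * r) ^ (-(d : ℝ) / 2) *
          Real.exp (-‖x - y‖ ^ 2 / (2 * s) + -‖y - z‖ ^ 2 / (2 * r)) := by
            rw [Real.exp_add]; ring
      _ = _ := by rw [hexp, Real.exp_add]; ring
  simp_rw [key]
  rw [lintegral_const_mul _ (by fun_prop), lintegral_gaussian (by positivity),
    ← ENNReal.ofReal_mul (by positivity)]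
  congr 1
  unfold heatKernel
  have e : (2 * Real.pi * s) ^ (-(d : ℝ) / 2) * (2 * Real.pi * r) ^ (-(d : ℝ) / 2) *
      (Real.pi / ((s + r) / (2 * s * r))) ^ ((d : ℝ) / 2) =
      (2 * Real.pi * (s + r)) ^ (-(d : ℝ) / 2) := by
    rw [neg_div, Real.rpow_neg (by positivity), Real.rpow_neg (by positivity),
      Real.rpow_neg (by positivity), ← Real.inv_rpow (by positivity),
      ← Real.inv_rpow (by positivity), ← Real.inv_rpow (by positivity),
      ← Real.mul_rpow (by positivity) (by positivity),
      ← Real.mul_rpow (by positivity) (by positivity)]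
    congr 1
    field_simp
  rw [← e]
  ring

/-- The semigroup property `P_s P_r = P_{s+r}` on nonnegative functions. -/
lemma heat_semigroup {s r : ℝ} (hs : 0 < s) (hr : 0 < r) (x : EuclideanSpace ℝ (Fin d))
    {w : EuclideanSpace ℝ (Fin d) → ℝ≥0∞} (hw : Measurable w) :
    ∫⁻ y, ENNReal.ofReal (heatKernel d s x y) *
        ∫⁻ z, ENNReal.ofReal (heatKernel d r y z) * w z =
      ∫⁻ z, ENNReal.ofReal (heatKernel d (s + r) x z) * w z := by
  have hK := measurable_heatKernel_right s x
  have hK2 : Measurable fun p : EuclideanSpace ℝ (Fin d) × EuclideanSpace ℝ (Fin d) =>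
      ENNReal.ofReal (heatKernel d r p.1 p.2) :=
    measurable_heatKernel measurable_const measurable_fst measurable_snd
  calc _ = ∫⁻ y, ∫⁻ z, ENNReal.ofReal (heatKernel d s x y) *
        (ENNReal.ofReal (heatKernel d r y z) * w z) :=
        lintegral_congr fun y =>
          (lintegral_const_mul _ ((measurable_heatKernel_right r y).mul hw)).symm
    _ = ∫⁻ z, ∫⁻ y, ENNReal.ofReal (heatKernel d s x y) *
        (ENNReal.ofReal (heatKernel d r y z) * w z) := by
        refine lintegral_lintegral_swap (Measurable.aemeasurable ?_)
        exact (hK.comp measurable_fst).mul (hK2.mul (hw.comp measurable_snd))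
    _ = _ := by
        refine lintegral_congr fun z => ?_
        have hKz : Measurable fun y => ENNReal.ofReal (heatKernel d r y z) :=
          measurable_heatKernel measurable_const measurable_id measurable_const
        rw [← heatKernel_comp hs hr, ← lintegral_mul_const _ (f := fun y =>
          ENNReal.ofReal (heatKernel d s x y) * ENNReal.ofReal (heatKernel d r y z))
          (hK.mul hKz)]
        simp_rw [mul_assoc]

lemma lintegral_heatKernel {t : ℝ} (ht : 0 < t) (x : EuclideanSpace ℝ (Fin d)) :
    ∫⁻ y, ENNReal.ofReal (heatKernel d t x y) = 1 := by
  have key : ∀ y, ENNReal.ofReal (heatKernel d t x y) =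
      ENNReal.ofReal ((2 * Real.pi * t) ^ (-(d : ℝ) / 2)) *
      ENNReal.ofReal (Real.exp (-(1 / (2 * t)) * ‖y - x‖ ^ 2)) := fun y => by
    rw [← ENNReal.ofReal_mul (by positivity)]
    unfold heatKernel
    rw [norm_sub_rev x y]
    congr 3
    ring
  simp_rw [key]
  rw [lintegral_const_mul _ (by fun_prop), lintegral_gaussian (by positivity),
    ← ENNReal.ofReal_mul (by positivity), neg_div, Real.rpow_neg (by positivity),
    ← Real.inv_rpow (by positivity), ← Real.mul_rpow (by positivity) (by positivity)]
  have : (2 * Real.pi * t)⁻¹ * (Real.pi / (1 / (2 * t))) = 1 := by field_simp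
  rw [this]
  simp

/-- Jensen's inequality for the square under the heat semigroup, when the mean is finite. -/
lemma sq_lintegral_heatKernel_le {t : ℝ} (ht : 0 < t) (x : EuclideanSpace ℝ (Fin d))
    {v : EuclideanSpace ℝ (Fin d) → ℝ} (hv : Measurable v) (hv0 : ∀ y, 0 ≤ v y)
    (hfin : ∫⁻ y, ENNReal.ofReal (heatKernel d t x y) * ENNReal.ofReal (v y) ≠ ⊤) :
    (∫⁻ y, ENNReal.ofReal (heatKernel d t x y) * ENNReal.ofReal (v y)) ^ 2 ≤
      ∫⁻ y, ENNReal.ofReal (heatKernel d t x y) * ENNReal.ofReal (v y) ^ 2 := by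
  have hK : Measurable fun y => ENNReal.ofReal (heatKernel d t x y) :=
    measurable_heatKernel_right _ _
  set l := ∫⁻ y, ENNReal.ofReal (heatKernel d t x y) * ENNReal.ofReal (v y) with hl
  -- Integrate `2 l v ≤ l² + v²` against the kernel, `l` being the mean itself.
  have h1 : ∀ y, (2 * l) * (ENNReal.ofReal (heatKernel d t x y) * ENNReal.ofReal (v y)) ≤
      l ^ 2 * ENNReal.ofReal (heatKernel d t x y) +
        ENNReal.ofReal (heatKernel d t x y) * ENNReal.ofReal (v y) ^ 2 := fun y => by
    have : 2 * l * ENNReal.ofReal (v y) ≤ l ^ 2 + ENNReal.ofReal (v y) ^ 2 := by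
      rw [← ENNReal.ofReal_toReal hfin, ← ENNReal.ofReal_pow ENNReal.toReal_nonneg,
        ← ENNReal.ofReal_pow (hv0 y), ← ENNReal.ofReal_add (by positivity) (by positivity),
        ← ENNReal.ofReal_ofNat 2, ← ENNReal.ofReal_mul (by norm_num),
        ← ENNReal.ofReal_mul (by positivity)]
      exact ENNReal.ofReal_le_ofReal (two_mul_le_add_sq _ _)
    calc _ = ENNReal.ofReal (heatKernel d t x y) * (2 * l * ENNReal.ofReal (v y)) := by ring
      _ ≤ ENNReal.ofReal (heatKernel d t x y) * (l ^ 2 + ENNReal.ofReal (v y) ^ 2) := by gcongr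
      _ = _ := by ring
  have h2 := lintegral_mono (μ := volume) h1
  rw [lintegral_const_mul _ (f := fun y => ENNReal.ofReal (heatKernel d t x y) *
      ENNReal.ofReal (v y)) (hK.mul hv.ennreal_ofReal), ← hl,
    lintegral_add_left (hK.const_mul _), lintegral_const_mul _ hK, lintegral_heatKernel ht,
    mul_one] at h2
  refine (ENNReal.add_le_add_iff_left (ENNReal.pow_ne_top hfin : l ^ 2 ≠ ⊤)).1 ?_
  calc l ^ 2 + l ^ 2 = 2 * l * l := by ring
    _ ≤ _ := h2

/-! ### Mild solutions compared with the spatially constant one -/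

variable {φ : EuclideanSpace ℝ (Fin d) → ℝ} {u : ℝ → EuclideanSpace ℝ (Fin d) → ℝ}

/-- The absorption rate `P_r(u(t-r)²)(x)` at backward time `r`, meant for `0 < r < t`. -/
noncomputable def absorb (d : ℕ) (u : ℝ → EuclideanSpace ℝ (Fin d) → ℝ) (t : ℝ)
    (x : EuclideanSpace ℝ (Fin d)) (r : ℝ) : ℝ≥0∞ :=
  ∫⁻ y, ENNReal.ofReal (heatKernel d r x y) * ENNReal.ofReal (u (t - r) y) ^ 2

lemma measurable_absorb (hu : Measurable (Function.uncurry u)) (t : ℝ)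
    : Measurable fun p : ℝ × EuclideanSpace ℝ (Fin d) => absorb d u t p.2 p.1 := by
  unfold absorb
  refine Measurable.lintegral_prod_right' (f := fun q : (ℝ × EuclideanSpace ℝ (Fin d)) ×
    EuclideanSpace ℝ (Fin d) => ENNReal.ofReal (heatKernel d q.1.1 q.1.2 q.2) *
      ENNReal.ofReal (u (t - q.1.1) q.2) ^ 2) ?_
  refine (measurable_heatKernel (by fun_prop) (by fun_prop) (by fun_prop)).mul ?_
  have : Measurable fun q : (ℝ × EuclideanSpace ℝ (Fin d)) × EuclideanSpace ℝ (Fin d) =>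
      Function.uncurry u (t - q.1.1, q.2) := hu.comp (by fun_prop)
  exact this.ennreal_ofReal.pow_const 2

lemma mild_eq (hu : IsMildSolution d φ u) {t : ℝ} (ht : 0 < t) (x : EuclideanSpace ℝ (Fin d)) :
    ENNReal.ofReal (u t x) + ∫⁻ r in Ioo 0 t, absorb d u t x r =
      ∫⁻ y, ENNReal.ofReal (heatKernel d t x y) * ENNReal.ofReal (φ y) := by
  have h := hu.2.2 t x ht
  have e1 : ∫⁻ y, ENNReal.ofReal (heatKernel d t x y * φ y) =
      ∫⁻ y, ENNReal.ofReal (heatKernel d t x y) * ENNReal.ofReal (φ y) :=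
    lintegral_congr fun y => ENNReal.ofReal_mul (heatKernel_nonneg ht.le x y)
  rw [← e1, ← h]
  congr 1
  refine setLIntegral_congr_fun measurableSet_Ioo fun r hr => lintegral_congr fun y => ?_
  rw [ENNReal.ofReal_mul (heatKernel_nonneg hr.1.le x y), ENNReal.ofReal_pow (hu.2.1 _ _)]

lemma heat_init_le {c : ℝ} (hφ : ∀ y, φ y ≤ c) {t : ℝ} (ht : 0 < t)
    (x : EuclideanSpace ℝ (Fin d)) :
    ∫⁻ y, ENNReal.ofReal (heatKernel d t x y) * ENNReal.ofReal (φ y) ≤ ENNReal.ofReal c := by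
  calc _ ≤ ∫⁻ y, ENNReal.ofReal (heatKernel d t x y) * ENNReal.ofReal c :=
        lintegral_mono fun y => by gcongr; exact hφ y
    _ = _ := by
      rw [lintegral_mul_const _ (measurable_heatKernel_right _ _),
        lintegral_heatKernel ht, one_mul]

set_option maxHeartbeats 1000000 in
/-- The mild equation at time `t - s`, propagated by `P_s`. -/
lemma mild_shift (hu : IsMildSolution d φ u) (hφ : Measurable φ) {s t : ℝ} (hs : 0 < s)
    (hst : s < t) (x : EuclideanSpace ℝ (Fin d)) :
    (∫⁻ y, ENNReal.ofReal (heatKernel d s x y) * ENNReal.ofReal (u (t - s) y)) +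
      ∫⁻ r in Ioo s t, absorb d u t x r =
      ∫⁻ y, ENNReal.ofReal (heatKernel d t x y) * ENNReal.ofReal (φ y) := by
  have hum := hu.1
  have hK : Measurable fun y => ENNReal.ofReal (heatKernel d s x y) :=
    measurable_heatKernel_right _ _
  have huy : ∀ a, Measurable fun y => ENNReal.ofReal (u a y) := fun a =>
    (hum.comp measurable_prodMk_left).ennreal_ofReal
  have hts : 0 < t - s := by linarith
  have h1 : ∫⁻ y, ENNReal.ofReal (heatKernel d s x y) * (ENNReal.ofReal (u (t - s) y) +
      ∫⁻ r in Ioo 0 (t - s), absorb d u (t - s) y r) =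
      ∫⁻ y, ENNReal.ofReal (heatKernel d t x y) * ENNReal.ofReal (φ y) := by
    simp_rw [mild_eq hu hts]
    rw [heat_semigroup hs hts x hφ.ennreal_ofReal, add_sub_cancel]
  rw [← h1]
  simp_rw [mul_add]
  rw [lintegral_add_left (f := fun y => ENNReal.ofReal (heatKernel d s x y) *
    ENNReal.ofReal (u (t - s) y)) (hK.mul (huy _))]
  congr 1
  have hA : Measurable fun p : ℝ × EuclideanSpace ℝ (Fin d) => absorb d u (t - s) p.2 p.1 :=
    measurable_absorb hum _
  have hG : Measurable fun r => absorb d u t x r :=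
    (measurable_absorb hum t).comp measurable_prodMk_right
  calc ∫⁻ r in Ioo s t, absorb d u t x r
      = ∫⁻ r in Ioo 0 (t - s), absorb d u t x (s + r) := by
        rw [← (measurePreserving_add_left volume s).setLIntegral_comp_preimage
          measurableSet_Ioo hG]
        simp
    _ = ∫⁻ r in Ioo 0 (t - s), ∫⁻ y, ENNReal.ofReal (heatKernel d s x y) *
          absorb d u (t - s) y r := by
        refine setLIntegral_congr_fun measurableSet_Ioo fun r hr => ?_
        have := heat_semigroup hs hr.1 x ((huy (t - s - r)).pow_const 2)
        rw [sub_sub] at this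
        simp only [absorb, sub_sub]
        exact this.symm
    _ = ∫⁻ y, ∫⁻ r in Ioo 0 (t - s), ENNReal.ofReal (heatKernel d s x y) *
          absorb d u (t - s) y r := by
        refine lintegral_lintegral_swap (Measurable.aemeasurable ?_)
        exact (hK.comp measurable_snd).mul hA
    _ = _ := by
        refine lintegral_congr fun y => lintegral_const_mul _ ?_
        exact hA.comp measurable_prodMk_right

set_option maxHeartbeats 1000000 in
/-- Comparison with the spatially constant solution started from `c`. Along
`F(s) = P_s u(t-s)(x)`, Jensen's inequality gives `F' = P_s(u(t-s)²)(x) ≥ F²`, while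
`F(0) = u(t,x)` and `F(t) = P_t φ(x) ≤ c`. -/
lemma mild_le (hu : IsMildSolution d φ u) (hφ : Measurable φ) {c : ℝ} (hc : 0 < c)
    (hφc : ∀ y, φ y ≤ c) {t : ℝ} (ht : 0 < t) (x : EuclideanSpace ℝ (Fin d)) :
    u t x ≤ c / (1 + c * t) := by
  rcases (hu.2.1 t x).eq_or_lt with h0 | h0
  · rw [← h0]; positivity
  have hG : Measurable fun r => absorb d u t x r :=
    (measurable_absorb hu.1 t).comp measurable_prodMk_right
  have hE := mild_eq hu ht x
  have hA := heat_init_le hφc ht x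
  set A := ∫⁻ y, ENNReal.ofReal (heatKernel d t x y) * ENNReal.ofReal (φ y) with hAdef
  have hAtop : A ≠ ⊤ := ne_top_of_le_ne_top ENNReal.ofReal_ne_top hA
  have hIt : ∫⁻ r in Ioo 0 t, absorb d u t x r ≠ ⊤ :=
    ne_top_of_le_ne_top hAtop (hE ▸ le_add_self)
  have hI : ∀ s, s ≤ t → ∫⁻ r in Ioo 0 s, absorb d u t x r ≠ ⊤ := fun s hs =>
    ne_top_of_le_ne_top hIt (lintegral_mono_set (Ioo_subset_Ioo_right hs))
  set g : ℝ → ℝ := (Ioo 0 t).indicator fun r => (absorb d u t x r).toReal with hg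
  have hgi : Integrable g := by
    rw [hg, integrable_indicator_iff measurableSet_Ioo]
    exact integrable_toReal_of_lintegral_ne_top hG.aemeasurable hIt
  have hgF : ∀ s, 0 ≤ s → s ≤ t →
      ENNReal.ofReal (u t x + ∫ r in (0 : ℝ)..s, g r) =
        ENNReal.ofReal (u t x) + ∫⁻ r in Ioo 0 s, absorb d u t x r := fun s hs hst => by
    have : ∫ r in (0 : ℝ)..s, g r = (∫⁻ r in Ioo 0 s, absorb d u t x r).toReal := by
      rw [intervalIntegral.integral_of_le hs, integral_Ioc_eq_integral_Ioo,
        ← integral_toReal hG.aemeasurable (ae_lt_top hG (hI s hst))]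
      refine setIntegral_congr_fun measurableSet_Ioo fun r hr => ?_
      exact indicator_of_mem (show r ∈ Ioo 0 t from ⟨hr.1, hr.2.trans_le hst⟩) _
    rw [this, ENNReal.ofReal_add h0.le ENNReal.toReal_nonneg, ENNReal.ofReal_toReal (hI s hst)]
  have key := riccati_bound hgi ht h0 (c := c) ?_ ?_
  · have h1 : t + 1 / c = (1 + c * t) / c := by field_simp; ring
    rw [h1] at key
    have h2 : 0 < (1 + c * t) / c := by positivity
    rw [le_one_div h2 h0, one_div_div] at key
    exact key
  · have hfin : ∀ᵐ r, r ∈ Ioo 0 t → absorb d u t x r < ⊤ :=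
      (ae_restrict_iff' measurableSet_Ioo).1 (ae_lt_top hG hIt)
    filter_upwards [hfin] with s hsf hs
    have hsh := mild_shift hu hφ hs.1 hs.2 x
    rw [← hAdef] at hsh
    set f := ∫⁻ y, ENNReal.ofReal (heatKernel d s x y) * ENNReal.ofReal (u (t - s) y) with hf
    have hsplit : ∫⁻ r in Ioo 0 t, absorb d u t x r =
        (∫⁻ r in Ioo 0 s, absorb d u t x r) + ∫⁻ r in Ioo s t, absorb d u t x r := by
      rw [← Ioc_union_Ioo_eq_Ioo hs.1.le hs.2, lintegral_union measurableSet_Ioo,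
        setLIntegral_congr (Ioo_ae_eq_Ioc (a := 0) (b := s))]
      exact Set.disjoint_left.2 fun a ha hb => (not_lt.2 ha.2) hb.1
    have hfF : f = ENNReal.ofReal (u t x + ∫ r in (0 : ℝ)..s, g r) := by
      rw [hgF s hs.1.le hs.2.le]
      have hne : ∫⁻ r in Ioo s t, absorb d u t x r ≠ ⊤ :=
        ne_top_of_le_ne_top hAtop (hsh ▸ le_add_self)
      refine (ENNReal.add_left_inj hne).1 ?_
      rw [hsh, ← hE, hsplit, add_assoc]
    have hftop : f ≠ ⊤ := hfF ▸ ENNReal.ofReal_ne_top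
    have hJ := sq_lintegral_heatKernel_le hs.1 x (v := u (t - s))
      (hu.1.comp measurable_prodMk_left) (hu.2.1 _) hftop
    have hgs : g s = (absorb d u t x s).toReal := indicator_of_mem hs _
    have hgn : 0 ≤ ∫ r in (0 : ℝ)..s, g r := by
      refine intervalIntegral.integral_nonneg hs.1.le fun r _ => ?_
      exact indicator_nonneg (fun _ _ => ENNReal.toReal_nonneg) _
    have hJ' : f ^ 2 ≤ absorb d u t x s := hJ
    rw [hfF, ← ENNReal.ofReal_pow (by linarith)] at hJ'
    rw [hgs]
    exact (ENNReal.ofReal_le_iff_le_toReal (hsf hs).ne).1 hJ'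
  · have := hgF t ht.le le_rfl
    rw [hE] at this
    rw [← this] at hA
    exact (ENNReal.ofReal_le_ofReal_iff hc.le).1 hA

/-- Since `u` lies below the spatially constant solution `c/(1+ct)`, it loses at most
`c - c/(1+ct)` of its free mass `P_t φ(x)` to absorption. -/
lemma le_mild (hu : IsMildSolution d φ u) (hφ : Measurable φ) {c : ℝ} (hc : 0 < c)
    (hφc : ∀ y, φ y ≤ c) {t : ℝ} (ht : 0 < t) (x : EuclideanSpace ℝ (Fin d)) :
    (∫⁻ y, ENNReal.ofReal (heatKernel d t x y) * ENNReal.ofReal (φ y)).toReal -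
      (c - c / (1 + c * t)) ≤ u t x := by
  have hder : ∀ r ∈ Icc 0 t, HasDerivAt (fun r => c / (1 + c * (t - r)))
      ((c / (1 + c * (t - r))) ^ 2) r := fun r hr => by
    have hpos : 0 < 1 + c * (t - r) := by
      have := mul_nonneg hc.le (sub_nonneg.2 hr.2); linarith
    have h1 : HasDerivAt (fun r => 1 + c * (t - r)) (-c) r := by
      simpa using (((hasDerivAt_id r).const_sub t).const_mul c).const_add 1
    have := (hasDerivAt_const r c).div h1 hpos.ne'
    refine this.congr_deriv ?_
    field_simp
    ring
  have hcont : ContinuousOn (fun r => (c / (1 + c * (t - r))) ^ 2) (Icc 0 t) := fun r hr =>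
    ((hder r hr).continuousAt.pow 2).continuousWithinAt
  have hint : ∫ r in (0 : ℝ)..t, (c / (1 + c * (t - r))) ^ 2 = c - c / (1 + c * t) := by
    rw [intervalIntegral.integral_eq_sub_of_hasDerivAt (f := fun r => c / (1 + c * (t - r)))]
    · simp
    · rwa [uIcc_of_le ht.le]
    · exact ContinuousOn.intervalIntegrable (by rwa [uIcc_of_le ht.le])
  have hle : ∫⁻ r in Ioo 0 t, absorb d u t x r ≤ ENNReal.ofReal (c - c / (1 + c * t)) := by
    rw [← hint, intervalIntegral.integral_of_le ht.le, integral_Ioc_eq_integral_Ioo,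
      ofReal_integral_eq_lintegral_ofReal
        (hcont.integrableOn_Icc.mono_set Ioo_subset_Icc_self)
        (Eventually.of_forall fun r => sq_nonneg _)]
    refine setLIntegral_mono' measurableSet_Ioo fun r hr => ?_
    unfold absorb
    calc _ ≤ ∫⁻ y, ENNReal.ofReal (heatKernel d r x y) *
          ENNReal.ofReal ((c / (1 + c * (t - r))) ^ 2) := by
          refine lintegral_mono fun y => ?_
          rw [← ENNReal.ofReal_pow (hu.2.1 _ _)]
          gcongr
          · exact hu.2.1 _ _
          · exact mild_le hu hφ hc hφc (by linarith [hr.2]) y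
      _ = _ := by
          rw [lintegral_mul_const _ (measurable_heatKernel_right _ _),
            lintegral_heatKernel hr.1, one_mul]
  have hE := mild_eq hu ht x
  have hnn : 0 ≤ c - c / (1 + c * t) := by
    have : c / (1 + c * t) ≤ c := div_le_self hc.le (by nlinarith [mul_pos hc ht])
    linarith
  rw [sub_le_iff_le_add]
  refine ENNReal.toReal_le_of_le_ofReal (add_nonneg (hu.2.1 _ _) hnn) ?_
  rw [← hE, ENNReal.ofReal_add (hu.2.1 _ _) hnn]
  gcongr

/-! ### Exhaustion by balls -/

lemma tendsto_heat_ball {t : ℝ} (ht : 0 < t) (x : EuclideanSpace ℝ (Fin d)) {c : ℝ} (hc : 0 ≤ c) :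
    Tendsto (fun s : ℝ => ∫⁻ y, ENNReal.ofReal (heatKernel d t x y) *
      ENNReal.ofReal ((ball (0 : EuclideanSpace ℝ (Fin d)) s).indicator (fun _ => c) y))
      atTop (nhds (ENNReal.ofReal c)) := by
  have hK : Measurable fun y => ENNReal.ofReal (heatKernel d t x y) :=
    measurable_heatKernel_right _ _
  have hlim : ∫⁻ y, ENNReal.ofReal (heatKernel d t x y) * ENNReal.ofReal c =
      ENNReal.ofReal c := by
    rw [lintegral_mul_const _ hK, lintegral_heatKernel ht, one_mul]
  rw [← hlim]
  refine tendsto_lintegral_filter_of_dominated_convergence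
    (fun y => ENNReal.ofReal (heatKernel d t x y) * ENNReal.ofReal c) ?_ ?_ ?_ ?_
  · exact Eventually.of_forall fun s =>
      hK.mul (measurable_const.indicator measurableSet_ball).ennreal_ofReal
  · refine Eventually.of_forall fun s => Eventually.of_forall fun y => ?_
    refine mul_le_mul' le_rfl (ENNReal.ofReal_le_ofReal ?_)
    exact indicator_le_self' (fun _ _ => hc) y
  · rw [hlim]; exact ENNReal.ofReal_ne_top
  · refine Eventually.of_forall fun y => tendsto_const_nhds.congr' ?_
    filter_upwards [eventually_gt_atTop ‖y‖] with s hs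
    rw [indicator_of_mem (by simpa using hs)]

end Heat

/-- with `u_{s,n}` the mild solution with initial data `n·1_{B(s)}`,
`lim_{s→∞} sup_{n≥1} u_{s,n}(t,x) = 1/t`. -/
theorem stmt_15 (d : ℕ) (hd : 1 ≤ d) (t : ℝ) (ht : 0 < t)
    (x : EuclideanSpace ℝ (Fin d))
    (u : ℝ → ℕ → ℝ → EuclideanSpace ℝ (Fin d) → ℝ)
    (hu : ∀ s : ℝ, 0 < s → ∀ n : ℕ, 1 ≤ n →
      IsMildSolution d
        ((Metric.ball (0 : EuclideanSpace ℝ (Fin d)) s).indicator fun _ => (n : ℝ))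
        (u s n)) :
    Tendsto (fun s : ℝ => ⨆ n : ℕ, u s (n + 1) t x) atTop (nhds (1 / t)) := by
  have hup : ∀ s : ℝ, 0 < s → ∀ n : ℕ, u s (n + 1) t x ≤ 1 / t := fun s hs n => by
    have hc : (0 : ℝ) < ((n + 1 : ℕ) : ℝ) := by positivity
    have h := mild_le (hu s hs (n + 1) (by omega))
      (measurable_const.indicator measurableSet_ball) hc
      (fun y => indicator_le_self' (fun _ _ => hc.le) y) ht x
    refine h.trans ?_
    rw [div_le_div_iff₀ (by positivity) ht]
    linarith
  have hv : Tendsto (fun n : ℕ => ((n + 1 : ℕ) : ℝ) / (1 + ((n + 1 : ℕ) : ℝ) * t)) atTop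
      (nhds (1 / t)) := by
    have h1 : Tendsto (fun n : ℕ => (((n + 1 : ℕ) : ℝ))⁻¹) atTop (nhds 0) :=
      tendsto_inv_atTop_zero.comp (tendsto_natCast_atTop_atTop.comp (tendsto_add_atTop_nat 1))
    have h2 : Tendsto (fun n : ℕ => 1 / ((((n + 1 : ℕ) : ℝ))⁻¹ + t)) atTop (nhds (1 / (0 + t))) :=
      tendsto_const_nhds.div (h1.add_const t) (by linarith)
    rw [zero_add] at h2
    refine h2.congr fun n => ?_
    have hc : (0 : ℝ) < ((n + 1 : ℕ) : ℝ) := by positivity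
    field_simp
  refine tendsto_order.2 ⟨fun a ha => ?_, fun a ha => ?_⟩
  · obtain ⟨n, hn⟩ := ((tendsto_order.1 hv).1 a ha).exists
    have hc : (0 : ℝ) < ((n + 1 : ℕ) : ℝ) := by positivity
    set c : ℝ := ((n + 1 : ℕ) : ℝ) with hcdef
    have hP := (ENNReal.tendsto_toReal ENNReal.ofReal_ne_top).comp (tendsto_heat_ball ht x hc.le)
    rw [ENNReal.toReal_ofReal hc.le] at hP
    filter_upwards [eventually_gt_atTop 0,
      (tendsto_order.1 hP).1 (c - (c / (1 + c * t) - a)) (by linarith)] with s hs hPs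
    have hl := le_mild (hu s hs (n + 1) (by omega))
      (measurable_const.indicator measurableSet_ball) hc
      (fun y => indicator_le_self' (fun _ _ => hc.le) y) ht x
    have hb : BddAbove (range fun n : ℕ => u s (n + 1) t x) :=
      ⟨1 / t, by rintro _ ⟨m, rfl⟩; exact hup s hs m⟩
    refine lt_of_lt_of_le ?_ (le_ciSup hb n)
    simp only [Function.comp_apply] at hPs
    linarith
  · filter_upwards [eventually_gt_atTop 0] with s hs
    exact (ciSup_le (hup s hs)).trans_lt ha
end

section
/- Let d = 2 and 0 < r' < r. For each positive integer n, let u_n be a mild solution of ∂_t u = (1/2)Δu - u² with initial data n·1_{B(r')}, and set u(t,x) := sup_{n ≥ 1} u_n(t,x). Then sup { u(t,x) : t > 0, x ∈ ℝ², ‖x‖ ≥ r } < ∞. -/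
/-!
Each `u_n` lies below a stationary barrier whose value outside `B(r)` does not depend on `n`.

Let `f` be a smooth cutoff, equal to `1` on `B(r')` and to `0` outside `B(r)`, and put
`V = K (1/n + 1 - f)⁻²`. Writing `h = 1/n + 1 - f`, one has `½ΔV = K h⁻⁴ (3|∇h|² - hΔh)`
and `V² = K² h⁻⁴`, so `½ΔV ≤ V²` on the whole plane once `K` dominates the bounded quantity
`3|∇f|² + 2|Δf|`, uniformly in `n` (`exists_barrier`). Moreover `V = K n² ≥ n` on `B(r')` if
`K ≥ 1`, and `V ≤ K` outside `B(r)`. By comparison `u_n ≤ V`, hence `u_n ≤ K` outside `B(r)`.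

The comparison principle (`mild_le_supersolution`) is proved without any regularity of `u`.
The mild equation is rewritten for the semigroup `e^{-Cs} P_s`, with the source `C u - u²`
(`killed_duhamel`, which rests on Chapman–Kolmogorov and Tonelli). The supersolution satisfies
the corresponding inequality with the source `C V - V²` (`supersolution_killed`, from the heat
equation for `s ↦ P_s V(x)`, itself a consequence of Gaussian integration by parts). If `C`
bounds `u + V`, then `(C u - u²) - (C V - V²) ≤ C (u - V)⁺`, so
`S = sup_{(0,T] × ℝ²} (u - V)⁺` satisfies `S ≤ C ∫₀ᵀ e^{-Cs} ds · S = (1 - e^{-CT}) S`, which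
forces `S = 0`.
-/

open MeasureTheory Filter Set Metric
open scoped ENNReal

/-! ### The heat kernel of the plane -/

/-- The plane `ℝ²`. -/
abbrev Plane : Type := EuclideanSpace ℝ (Fin 2)

/-- The heat kernel of the plane with values in `[0,∞]`. -/
noncomputable def pk (s : ℝ) (x y : Plane) : ℝ≥0∞ := ENNReal.ofReal (heatKernel 2 s x y)

lemma heatKernel_two (s : ℝ) (x y : Plane) :
    heatKernel 2 s x y = (2 * Real.pi * s)⁻¹ * Real.exp (-(2 * s)⁻¹ * ‖x - y‖ ^ 2) := by
  unfold heatKernel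
  have h : (-((2 : ℕ) : ℝ) / 2) = -1 := by norm_num
  rw [h, Real.rpow_neg_one]
  congr 2
  rw [div_eq_mul_inv]; ring

lemma heatKernel_nonneg_s16 {s : ℝ} (hs : 0 < s) (x y : Plane) : 0 ≤ heatKernel 2 s x y := by
  rw [heatKernel_two]; positivity

lemma measurable_heatKernel_s16 :
    Measurable fun q : ℝ × Plane × Plane => heatKernel 2 q.1 q.2.1 q.2.2 := by
  simp only [heatKernel_two]
  fun_prop

lemma measurable_pk : Measurable fun q : ℝ × Plane × Plane => pk q.1 q.2.1 q.2.2 :=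
  measurable_heatKernel_s16.ennreal_ofReal

@[fun_prop]
lemma measurable_pk_comp {α : Type*} [MeasurableSpace α] {f : α → ℝ} {g h : α → Plane}
    (hf : Measurable f) (hg : Measurable g) (hh : Measurable h) :
    Measurable fun a => pk (f a) (g a) (h a) :=
  measurable_pk.comp (hf.prodMk (hg.prodMk hh))

lemma integral_gauss {b : ℝ} (hb : 0 < b) (m : Plane) :
    ∫ v : Plane, Real.exp (-b * ‖m - v‖ ^ 2) = Real.pi / b := by
  rw [integral_sub_left_eq_self (fun v : Plane => Real.exp (-b * ‖v‖ ^ 2)) volume m,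
    GaussianFourier.integral_rexp_neg_mul_sq_norm hb]
  simp

lemma integrable_gauss {b : ℝ} (hb : 0 < b) (m : Plane) :
    Integrable fun v : Plane => Real.exp (-b * ‖m - v‖ ^ 2) := by
  by_contra h
  have h1 := integral_gauss hb m
  rw [integral_undef h] at h1
  have : 0 < Real.pi / b := by positivity
  linarith

lemma lintegral_gauss {b : ℝ} (hb : 0 < b) (m : Plane) :
    ∫⁻ v : Plane, ENNReal.ofReal (Real.exp (-b * ‖m - v‖ ^ 2)) = ENNReal.ofReal (Real.pi / b) := by
  rw [← integral_gauss hb m, ofReal_integral_eq_lintegral_ofReal (integrable_gauss hb m)]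
  exact Eventually.of_forall fun v => (Real.exp_pos _).le

lemma lintegral_pk {s : ℝ} (hs : 0 < s) (x : Plane) : ∫⁻ y, pk s x y = 1 := by
  unfold pk
  simp only [heatKernel_two]
  have : ∀ y : Plane, ENNReal.ofReal ((2 * Real.pi * s)⁻¹ * Real.exp (-(2 * s)⁻¹ * ‖x - y‖ ^ 2)) =
      ENNReal.ofReal ((2 * Real.pi * s)⁻¹) *
        ENNReal.ofReal (Real.exp (-(2 * s)⁻¹ * ‖x - y‖ ^ 2)) :=
    fun y => ENNReal.ofReal_mul (by positivity)
  simp only [this]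
  rw [lintegral_const_mul' _ _ ENNReal.ofReal_ne_top, lintegral_gauss (by positivity),
    ← ENNReal.ofReal_mul (by positivity), ← ENNReal.ofReal_one]
  congr 1
  field_simp

lemma complete_square {s t : ℝ} (hs : 0 < s) (ht : 0 < t) (x y z : Plane) :
    -(2 * s)⁻¹ * ‖x - y‖ ^ 2 + -(2 * t)⁻¹ * ‖y - z‖ ^ 2 =
      -(2 * (s + t))⁻¹ * ‖x - z‖ ^ 2 +
        -((s + t) / (2 * s * t)) * ‖((t / (s + t)) • x + (s / (s + t)) • z) - y‖ ^ 2 := by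
  simp only [EuclideanSpace.norm_sq_eq, Fin.sum_univ_two, Real.norm_eq_abs, sq_abs,
    PiLp.sub_apply, PiLp.add_apply, PiLp.smul_apply, smul_eq_mul]
  field_simp
  ring

/-- Chapman–Kolmogorov, by completing the square in the exponent. -/
lemma chapman {s t : ℝ} (hs : 0 < s) (ht : 0 < t) (x z : Plane) :
    ∫⁻ y, pk s x y * pk t y z = pk (s + t) x z := by
  have h : ∀ y : Plane, pk s x y * pk t y z =
      ENNReal.ofReal ((2 * Real.pi * s)⁻¹ * (2 * Real.pi * t)⁻¹ *
        Real.exp (-(2 * (s + t))⁻¹ * ‖x - z‖ ^ 2)) *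
      ENNReal.ofReal (Real.exp (-((s + t) / (2 * s * t)) *
        ‖((t / (s + t)) • x + (s / (s + t)) • z) - y‖ ^ 2)) := by
    intro y
    unfold pk
    rw [← ENNReal.ofReal_mul (heatKernel_nonneg_s16 hs _ _), ← ENNReal.ofReal_mul (by positivity)]
    congr 1
    simp only [heatKernel_two]
    rw [mul_mul_mul_comm, ← Real.exp_add, complete_square hs ht, Real.exp_add]
    ring
  simp only [h]
  rw [lintegral_const_mul' _ _ ENNReal.ofReal_ne_top, lintegral_gauss (by positivity),
    ← ENNReal.ofReal_mul (by positivity)]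
  unfold pk
  rw [heatKernel_two]
  congr 1
  field_simp

/-! ### Killing the heat semigroup at a constant rate -/

/-- The killing factor `e^{-Cs}` with values in `[0,∞]`. -/
noncomputable def kf (C s : ℝ) : ℝ≥0∞ := ENNReal.ofReal (Real.exp (-C * s))

@[fun_prop]
lemma measurable_kf_comp {α : Type*} [MeasurableSpace α] (C : ℝ) {f : α → ℝ}
    (hf : Measurable f) : Measurable fun a => kf C (f a) := by
  unfold kf; fun_prop

lemma kf_ne_top (C s : ℝ) : kf C s ≠ ⊤ := ENNReal.ofReal_ne_top

lemma integral_kf (C t : ℝ) :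
    ∫ s in (0 : ℝ)..t, C * Real.exp (-C * s) = 1 - Real.exp (-C * t) := by
  have h : ∀ s ∈ uIcc 0 t,
      HasDerivAt (fun s => -Real.exp (-C * s)) (C * Real.exp (-C * s)) s := by
    intro s _
    have h1 : HasDerivAt (fun s : ℝ => -C * s) (-C) s := by
      simpa using (hasDerivAt_id s).const_mul (-C)
    exact h1.exp.neg.congr_deriv (by ring)
  rw [intervalIntegral.integral_eq_sub_of_hasDerivAt h
    (Continuous.intervalIntegrable (by fun_prop) _ _)]
  simp
  ring

lemma lintegral_kf {C : ℝ} (hC : 0 ≤ C) {t : ℝ} (ht : 0 ≤ t) :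
    ∫⁻ s in Ioo 0 t, ENNReal.ofReal C * kf C s = ENNReal.ofReal (1 - Real.exp (-C * t)) := by
  have hi : IntegrableOn (fun s => C * Real.exp (-C * s)) (Ioo 0 t) :=
    (Continuous.integrableOn_Icc (by fun_prop)).mono_set Ioo_subset_Icc_self
  rw [← integral_kf, intervalIntegral.integral_of_le ht, integral_Ioc_eq_integral_Ioo,
    ofReal_integral_eq_lintegral_ofReal hi
      (Eventually.of_forall fun s => by positivity)]
  refine lintegral_congr fun s => ?_
  rw [kf, ← ENNReal.ofReal_mul hC]

lemma lintegral_kf_add {C : ℝ} (hC : 0 ≤ C) {t : ℝ} (ht : 0 ≤ t) :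
    (∫⁻ s in Ioo 0 t, ENNReal.ofReal C * kf C s) + kf C t = 1 := by
  have : Real.exp (-C * t) ≤ 1 := Real.exp_le_one_iff.2 (by nlinarith)
  rw [lintegral_kf hC ht, kf, ← ENNReal.ofReal_add (by linarith) (by positivity)]
  simp

/-- The heat semigroup `P_s f (x) = ∫ p_s(x,y) f(y) dy` on `[0,∞]`-valued functions. -/
noncomputable def heatP (s : ℝ) (f : Plane → ℝ≥0∞) (x : Plane) : ℝ≥0∞ := ∫⁻ y, pk s x y * f y

lemma heatP_heatP {s t : ℝ} (hs : 0 < s) (ht : 0 < t) {f : Plane → ℝ≥0∞} (hf : Measurable f)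
    (x : Plane) : heatP s (heatP t f) x = heatP (s + t) f x := by
  unfold heatP
  calc ∫⁻ y, pk s x y * ∫⁻ z, pk t y z * f z
      = ∫⁻ y, ∫⁻ z, pk s x y * (pk t y z * f z) := by
        refine lintegral_congr fun y => ?_
        rw [lintegral_const_mul _ (by fun_prop)]
    _ = ∫⁻ z, ∫⁻ y, pk s x y * (pk t y z * f z) := by
        apply lintegral_lintegral_swap
        apply Measurable.aemeasurable
        unfold Function.uncurry
        fun_prop
    _ = ∫⁻ z, pk (s + t) x z * f z := by
        refine lintegral_congr fun z => ?_
        rw [← chapman hs ht, ← lintegral_mul_const _ (by fun_prop)]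
        simp only [mul_assoc]

@[fun_prop]
lemma measurable_heatP_comp {α : Type*} [MeasurableSpace α] {f : α → ℝ} {g : α → Plane}
    {F : α → Plane → ℝ≥0∞} (hf : Measurable f) (hg : Measurable g)
    (hF : Measurable (Function.uncurry F)) :
    Measurable fun a => heatP (f a) (F a) (g a) := by
  unfold heatP
  apply Measurable.lintegral_prod_right' (f := fun q : α × Plane => pk (f q.1) (g q.1) q.2 * F q.1 q.2)
  have : Measurable fun q : α × Plane => F q.1 q.2 := hF
  fun_prop

/-- Exchange of integrals over the triangle `0 < s < ρ < t`. -/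
lemma lintegral_triangle (t : ℝ) {k h : ℝ → ℝ≥0∞} (hk : Measurable k) (hh : Measurable h) :
    ∫⁻ s in Ioo 0 t, k s * ∫⁻ σ in Ioo 0 (t - s), h (s + σ) =
      ∫⁻ ρ in Ioo 0 t, (∫⁻ s in Ioo 0 ρ, k s) * h ρ := by
  have h1 : ∀ s, ∫⁻ σ in Ioo 0 (t - s), h (s + σ) = ∫⁻ ρ, (Ioo s t).indicator h ρ := by
    intro s
    rw [← lintegral_add_left_eq_self ((Ioo s t).indicator h) s, ← lintegral_indicator measurableSet_Ioo]
    refine lintegral_congr fun σ => ?_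
    by_cases hσ : σ ∈ Ioo 0 (t - s)
    · have : s + σ ∈ Ioo s t := ⟨by linarith [hσ.1], by linarith [hσ.2]⟩
      simp [hσ, this]
    · have : s + σ ∉ Ioo s t := fun h => hσ ⟨by linarith [h.1], by linarith [h.2]⟩
      rw [indicator_of_notMem hσ, indicator_of_notMem this]
  have hm : MeasurableSet {q : ℝ × ℝ | 0 < q.1 ∧ q.1 < q.2 ∧ q.2 < t} :=
    (measurableSet_lt measurable_const measurable_fst).inter
      ((measurableSet_lt measurable_fst measurable_snd).inter
        (measurableSet_lt measurable_snd measurable_const))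
  calc ∫⁻ s in Ioo 0 t, k s * ∫⁻ σ in Ioo 0 (t - s), h (s + σ)
      = ∫⁻ s, ∫⁻ ρ, {q : ℝ × ℝ | 0 < q.1 ∧ q.1 < q.2 ∧ q.2 < t}.indicator
          (fun q => k q.1 * h q.2) (s, ρ) := by
        rw [← lintegral_indicator measurableSet_Ioo]
        refine lintegral_congr fun s => ?_
        by_cases hs : s ∈ Ioo 0 t
        · rw [indicator_of_mem hs, h1,
            ← lintegral_const_mul _ (hh.indicator measurableSet_Ioo)]
          refine lintegral_congr fun ρ => ?_
          by_cases hρ : ρ ∈ Ioo s t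
          · rw [indicator_of_mem hρ, indicator_of_mem]
            exact ⟨hs.1, hρ.1, hρ.2⟩
          · rw [indicator_of_notMem hρ, indicator_of_notMem, mul_zero]
            exact fun h => hρ ⟨h.2.1, h.2.2⟩
        · rw [indicator_of_notMem hs]
          symm
          rw [lintegral_eq_zero_iff' ]
          · refine Eventually.of_forall fun ρ => indicator_of_notMem ?_ _
            exact fun h => hs ⟨h.1, h.2.1.trans h.2.2⟩
          · apply Measurable.aemeasurable
            exact ((by fun_prop : Measurable fun q : ℝ × ℝ => k q.1 * h q.2).indicator hm).comp
              measurable_prodMk_left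
    _ = ∫⁻ ρ, ∫⁻ s, {q : ℝ × ℝ | 0 < q.1 ∧ q.1 < q.2 ∧ q.2 < t}.indicator
          (fun q => k q.1 * h q.2) (s, ρ) := by
        apply lintegral_lintegral_swap
        apply Measurable.aemeasurable
        exact (by fun_prop : Measurable fun q : ℝ × ℝ => k q.1 * h q.2).indicator hm
    _ = ∫⁻ ρ in Ioo 0 t, (∫⁻ s in Ioo 0 ρ, k s) * h ρ := by
        rw [← lintegral_indicator measurableSet_Ioo]
        refine lintegral_congr fun ρ => ?_
        by_cases hρ : ρ ∈ Ioo 0 t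
        · rw [indicator_of_mem hρ, ← lintegral_mul_const _ hk,
            ← lintegral_indicator measurableSet_Ioo]
          refine lintegral_congr fun s => ?_
          by_cases hs : s ∈ Ioo 0 ρ
          · rw [indicator_of_mem hs, indicator_of_mem]
            exact ⟨hs.1, hs.2, hρ.2⟩
          · rw [indicator_of_notMem hs, indicator_of_notMem]
            exact fun h => hs ⟨h.1, h.2.1⟩
        · rw [indicator_of_notMem hρ]
          have : ∀ s, {q : ℝ × ℝ | 0 < q.1 ∧ q.1 < q.2 ∧ q.2 < t}.indicator
              (fun q => k q.1 * h q.2) (s, ρ) = 0 := fun s =>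
            indicator_of_notMem (fun h => hρ ⟨h.1.trans h.2.1, h.2.2⟩) _
          simp [this]

lemma heatP_add (s : ℝ) {f g : Plane → ℝ≥0∞} (hf : Measurable f) (x : Plane) :
    heatP s (fun y => f y + g y) x = heatP s f x + heatP s g x := by
  unfold heatP
  simp only [mul_add]
  exact lintegral_add_left (by fun_prop) _

lemma heatP_mono (s : ℝ) {f g : Plane → ℝ≥0∞} (h : ∀ y, f y ≤ g y) (x : Plane) :
    heatP s f x ≤ heatP s g x :=
  lintegral_mono fun y => mul_le_mul_right (h y) _

lemma heatP_const {s : ℝ} (hs : 0 < s) (c : ℝ≥0∞) (x : Plane) :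
    heatP s (fun _ => c) x = c := by
  unfold heatP
  rw [lintegral_mul_const _ (by fun_prop), lintegral_pk hs, one_mul]

lemma heatP_lintegral (s : ℝ) (S : Set ℝ) {F : ℝ → Plane → ℝ≥0∞}
    (hF : Measurable (Function.uncurry F)) (x : Plane) :
    heatP s (fun y => ∫⁻ σ in S, F σ y) x = ∫⁻ σ in S, heatP s (F σ) x := by
  unfold heatP
  have hF' : Measurable fun q : ℝ × Plane => F q.1 q.2 := hF
  have hF2 : Measurable fun q : Plane × ℝ => F q.2 q.1 := hF'.comp measurable_swap
  rw [lintegral_lintegral_swap (by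
    apply Measurable.aemeasurable; unfold Function.uncurry; fun_prop)]
  refine lintegral_congr fun y => ?_
  rw [lintegral_const_mul _ (by exact hF'.comp measurable_prodMk_right)]

/-- Duhamel's formula for the heat semigroup implies Duhamel's formula for the semigroup
`e^{-Cs} P_s` killed at rate `C`, with the source increased by `C u`. -/
lemma killed_duhamel {U W : ℝ → Plane → ℝ≥0∞} {Φ : Plane → ℝ≥0∞}
    (hU : Measurable (Function.uncurry U)) (hW : Measurable (Function.uncurry W))
    (hΦ : Measurable Φ) {C : ℝ} (hC : 0 ≤ C)
    (h : ∀ t x, 0 < t → U t x + ∫⁻ s in Ioo 0 t, heatP s (W (t - s)) x = heatP t Φ x)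
    {t : ℝ} (ht : 0 < t) (x : Plane) (hfin : heatP t Φ x ≠ ⊤) :
    U t x + ∫⁻ s in Ioo 0 t, kf C s * heatP s (W (t - s)) x =
      kf C t * heatP t Φ x +
        ∫⁻ s in Ioo 0 t, ENNReal.ofReal C * kf C s * heatP s (U (t - s)) x := by
  have hU' : Measurable fun q : ℝ × Plane => U q.1 q.2 := hU
  have hW' : Measurable fun q : ℝ × Plane => W q.1 q.2 := hW
  have hWm : ∀ {α : Type} [MeasurableSpace α] {a : α → ℝ} {b : α → Plane}, Measurable a →
      Measurable b → Measurable fun z => W (a z) (b z) := fun ha hb => hW'.comp (ha.prodMk hb)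
  have hUm : ∀ {α : Type} [MeasurableSpace α] {a : α → ℝ} {b : α → Plane}, Measurable a →
      Measurable b → Measurable fun z => U (a z) (b z) := fun ha hb => hU'.comp (ha.prodMk hb)
  have hh : Measurable fun ρ => heatP ρ (W (t - ρ)) x := by
    apply measurable_heatP_comp (by fun_prop) (by fun_prop)
    exact hWm (by fun_prop) (by fun_prop)
  set A := ∫⁻ s in Ioo 0 t, ENNReal.ofReal C * kf C s * heatP s (U (t - s)) x with hA
  set B := ∫⁻ ρ in Ioo 0 t, (∫⁻ s in Ioo 0 ρ, ENNReal.ofReal C * kf C s) * heatP ρ (W (t - ρ)) x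
    with hB
  set H := ∫⁻ s in Ioo 0 t, kf C s * heatP s (W (t - s)) x with hH
  -- Integrating the mild equation at time `t - s` against `C e^{-Cs} p_s(x, ·)`.
  have hAB : A + B = (∫⁻ s in Ioo 0 t, ENNReal.ofReal C * kf C s) * heatP t Φ x := by
    rw [hB, ← lintegral_triangle t (by fun_prop) hh, hA,
      ← lintegral_add_left, ← lintegral_mul_const _ (by fun_prop)]
    · refine setLIntegral_congr_fun measurableSet_Ioo fun s hs => ?_
      have hts : 0 < t - s := by linarith [hs.2]
      rw [← mul_add]
      congr 1
      have e1 : heatP s (heatP (t - s) Φ) x = heatP t Φ x := by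
        rw [heatP_heatP hs.1 hts hΦ, add_sub_cancel]
      rw [← e1, funext fun y => (h (t - s) y hts).symm, heatP_add s (hUm (by fun_prop) (by fun_prop)),
        heatP_lintegral]
      · congr 1
        refine setLIntegral_congr_fun measurableSet_Ioo fun σ hσ => ?_
        rw [← heatP_heatP hs.1 hσ.1 (hWm (by fun_prop) (by fun_prop)), sub_sub]
      · apply measurable_heatP_comp (by fun_prop) (by fun_prop)
        exact hWm (by fun_prop) (by fun_prop)
    · apply Measurable.mul (by fun_prop)
      apply measurable_heatP_comp (by fun_prop) (by fun_prop)
      exact hUm (by fun_prop) (by fun_prop)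
  have hHB : ∫⁻ s in Ioo 0 t, heatP s (W (t - s)) x = H + B := by
    rw [hH, hB, ← lintegral_add_left (by fun_prop)]
    refine setLIntegral_congr_fun measurableSet_Ioo fun s hs => ?_
    rw [← add_mul, add_comm, lintegral_kf_add hC hs.1.le, one_mul]
  have hmain := h t x ht
  have hBfin : B ≠ ⊤ := by
    refine ne_top_of_le_ne_top hfin ?_
    rw [← hmain, hHB]
    exact le_add_left le_add_self
  have : U t x + H + B = kf C t * heatP t Φ x + A + B := by
    rw [add_assoc, ← hHB, hmain, add_assoc, hAB, ← add_mul, add_comm (kf C t),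
      lintegral_kf_add hC ht.le, one_mul]
  exact (ENNReal.add_left_inj hBfin).1 this

/-! ### The heat semigroup on smooth functions -/

/-- The density of the standard Gaussian law of the plane. -/
noncomputable def gd (z : Plane) : ℝ := (2 * Real.pi)⁻¹ * Real.exp (-(1 / 2) * ‖z‖ ^ 2)

/-- The standard basis vectors of the plane. -/
noncomputable def eb (i : Fin 2) : Plane := EuclideanSpace.single i 1

/-- The partial derivative `∂ᵢ f`. -/
noncomputable def pd (i : Fin 2) (f : Plane → ℝ) (x : Plane) : ℝ := fderiv ℝ f x (eb i)

lemma gd_pos (z : Plane) : 0 < gd z := by unfold gd; positivity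

@[fun_prop]
lemma continuous_gd : Continuous gd := by unfold gd; fun_prop

lemma integrable_exp_norm {b : ℝ} (hb : 0 < b) :
    Integrable fun z : Plane => Real.exp (-b * ‖z‖ ^ 2) := by
  simpa using integrable_gauss hb (0 : Plane)

lemma integrable_gd : Integrable gd := (integrable_exp_norm (by norm_num)).const_mul _

lemma integral_gd : ∫ z, gd z = 1 := by
  have := integral_gauss (show (0 : ℝ) < 1 / 2 by norm_num) (0 : Plane)
  unfold gd
  rw [integral_const_mul]
  simp only [zero_sub, norm_neg] at this
  rw [this]
  field_simp

lemma norm_mul_gd_le (z : Plane) : ‖z‖ * gd z ≤ Real.exp (-(1 / 4) * ‖z‖ ^ 2) := by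
  have h1 : ‖z‖ ≤ Real.exp (1 / 4 * ‖z‖ ^ 2) := by
    have := Real.add_one_le_exp (1 / 4 * ‖z‖ ^ 2)
    nlinarith [sq_nonneg (‖z‖ / 2 - 1)]
  have h2 : (2 * Real.pi)⁻¹ ≤ 1 := inv_le_one_of_one_le₀ (by linarith [Real.pi_gt_three])
  calc ‖z‖ * gd z
      ≤ Real.exp (1 / 4 * ‖z‖ ^ 2) * (1 * Real.exp (-(1 / 2) * ‖z‖ ^ 2)) := by
        unfold gd; gcongr
    _ = Real.exp (-(1 / 4) * ‖z‖ ^ 2) := by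
        rw [one_mul, ← Real.exp_add]; congr 1; ring

lemma integrable_norm_mul_gd : Integrable fun z : Plane => ‖z‖ * gd z := by
  refine (integrable_exp_norm (show (0 : ℝ) < 1 / 4 by norm_num)).mono'
    (by fun_prop) (Eventually.of_forall fun z => ?_)
  rw [Real.norm_of_nonneg (mul_nonneg (norm_nonneg _) (gd_pos z).le)]
  exact norm_mul_gd_le z

lemma integrable_gd_mul {f : Plane → ℝ} (hf : Continuous f) {B : ℝ} (hB : ∀ z, |f z| ≤ B) :
    Integrable fun z => gd z * f z := by
  refine (integrable_gd.mul_const B).mono' (by fun_prop) (Eventually.of_forall fun z => ?_)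
  rw [norm_mul, Real.norm_of_nonneg (gd_pos z).le]
  exact mul_le_mul_of_nonneg_left (hB z) (gd_pos z).le

lemma integrable_gd_coord_mul {f : Plane → ℝ} (hf : Continuous f) {B : ℝ} (hB : ∀ z, |f z| ≤ B)
    (i : Fin 2) : Integrable fun z => gd z * z i * f z := by
  refine (integrable_norm_mul_gd.mul_const B).mono' (by fun_prop)
    (Eventually.of_forall fun z => ?_)
  rw [norm_mul, norm_mul, Real.norm_of_nonneg (gd_pos z).le, mul_comm (gd z)]
  have h1 := PiLp.norm_apply_le z i
  have h2 := gd_pos z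
  have h3 : ‖f z‖ ≤ B := hB z
  gcongr

lemma hasFDerivAt_gd (z : Plane) : HasFDerivAt gd (-(gd z) • innerSL ℝ z) z := by
  unfold gd
  have h := ((hasStrictFDerivAt_norm_sq z).hasFDerivAt.const_mul (-(1 / 2 : ℝ))).exp.const_mul
    ((2 * Real.pi)⁻¹)
  convert! h using 1
  ext w
  simp
  ring

lemma pd_gd (i : Fin 2) (z : Plane) : fderiv ℝ gd z (eb i) = -(gd z * z i) := by
  rw [(hasFDerivAt_gd z).fderiv]
  simp [eb, EuclideanSpace.inner_single_right]

/-- Gaussian integration by parts. -/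
lemma stein {f : Plane → ℝ} (hf : ContDiff ℝ 1 f) (i : Fin 2) {B : ℝ}
    (hB : ∀ z, |f z| ≤ B) (hB' : ∀ z, |pd i f z| ≤ B) :
    ∫ z, gd z * z i * f z = ∫ z, gd z * pd i f z := by
  have hc : Continuous fun z => pd i f z :=
    (hf.continuous_fderiv one_ne_zero).clm_apply continuous_const
  have h := integral_mul_fderiv_eq_neg_fderiv_mul_of_integrable (μ := volume) (f := gd) (g := f)
    (v := eb i) ?_ (integrable_gd_mul hc hB') (integrable_gd_mul hf.continuous hB)
    (fun x _ => (hasFDerivAt_gd x).differentiableAt)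
    (fun x _ => (hf.differentiable one_ne_zero) x)
  · unfold pd
    rw [h, ← integral_neg]
    simp only [pd_gd]
    congr 1
    ext z
    ring
  · simp only [pd_gd]
    convert! (integrable_gd_coord_mul hf.continuous hB i).neg using 1
    ext z
    simp

/-- The value at `x` of the heat semigroup at time `s`, in the scaled form
`E f(x + √s Z)` with `Z` standard Gaussian. -/
noncomputable def gE (f : Plane → ℝ) (x : Plane) (s : ℝ) : ℝ :=
  ∫ z, gd z * f (x + √s • z)

/-- The scaling `y = x + √s z` identifies the two forms of the heat semigroup. -/
lemma gE_eq {s : ℝ} (hs : 0 < s) (f : Plane → ℝ) (x : Plane) :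
    ∫ y, heatKernel 2 s x y * f y = gE f x s := by
  have h1 := Measure.integral_comp_smul (volume : Measure Plane)
    (fun w => heatKernel 2 s x (x + w) * f (x + w)) (√s)
  rw [integral_add_left_eq_self (fun y => heatKernel 2 s x y * f y) x] at h1
  have h2 : √s ^ 2 = s := Real.sq_sqrt hs.le
  simp only [finrank_euclideanSpace, Fintype.card_fin, h2] at h1
  rw [abs_of_pos (inv_pos.2 hs), smul_eq_mul] at h1
  have h3 : ∫ y, heatKernel 2 s x y * f y =
      s * ∫ z : Plane, heatKernel 2 s x (x + √s • z) * f (x + √s • z) := by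
    rw [h1]; field_simp
  rw [h3, gE, ← integral_const_mul]
  congr 1
  ext z
  rw [← mul_assoc]
  congr 1
  rw [heatKernel_two, gd, sub_add_cancel_left, norm_neg, norm_smul, mul_pow,
    Real.norm_of_nonneg (Real.sqrt_nonneg s), h2]
  have : -(2 * s)⁻¹ * (s * ‖z‖ ^ 2) = -(1 / 2) * ‖z‖ ^ 2 := by field_simp
  rw [this]
  field_simp

lemma heatP_ofReal {s : ℝ} (hs : 0 < s) {f : Plane → ℝ} (hf : Continuous f) {B : ℝ}
    (hB : ∀ z, |f z| ≤ B) (h0 : ∀ z, 0 ≤ f z) (x : Plane) :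
    heatP s (fun y => ENNReal.ofReal (f y)) x = ENNReal.ofReal (gE f x s) := by
  rw [← gE_eq hs, ofReal_integral_eq_lintegral_ofReal]
  · unfold heatP pk
    refine lintegral_congr fun y => ?_
    rw [ENNReal.ofReal_mul (heatKernel_nonneg_s16 hs _ _)]
  · have hk : Integrable fun y => heatKernel 2 s x y := by
      simp only [heatKernel_two]
      exact (integrable_gauss (by positivity) x).const_mul _
    refine hk.mul_bdd hf.aestronglyMeasurable (Eventually.of_forall hB)
  · exact Eventually.of_forall fun y => mul_nonneg (heatKernel_nonneg_s16 hs _ _) (h0 y)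

lemma gE_zero (f : Plane → ℝ) (x : Plane) : gE f x 0 = f x := by
  simp [gE, integral_mul_const, integral_gd]

lemma gE_nonneg {f : Plane → ℝ} (h0 : ∀ z, 0 ≤ f z) (x : Plane) (s : ℝ) : 0 ≤ gE f x s :=
  integral_nonneg fun z => mul_nonneg (gd_pos z).le (h0 _)

lemma continuous_gE {f : Plane → ℝ} (hf : Continuous f) {B : ℝ} (hB : ∀ z, |f z| ≤ B)
    (x : Plane) : Continuous (gE f x) := by
  unfold gE
  refine continuous_of_dominated (bound := fun z => gd z * B) (fun s => ?_) (fun s => ?_)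
    (integrable_gd.mul_const B) ?_
  · fun_prop
  · refine Eventually.of_forall fun z => ?_
    rw [norm_mul, Real.norm_of_nonneg (gd_pos z).le]
    exact mul_le_mul_of_nonneg_left (hB _) (gd_pos z).le
  · exact Eventually.of_forall fun z => by fun_prop

lemma fderiv_apply_eq_sum (f : Plane → ℝ) (x z : Plane) :
    fderiv ℝ f x z = ∑ i, z i * pd i f x := by
  have h : z = ∑ i, z i • eb i := by
    ext j
    fin_cases j <;> simp [eb, Fin.sum_univ_two]
  conv_lhs => rw [h]
  simp [pd]

/-- The heat equation for `s ↦ E f(x + √s Z)`. -/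
lemma hasDerivAt_gE {f : Plane → ℝ} (hf : ContDiff ℝ 2 f) {B : ℝ} (hB : ∀ z, |f z| ≤ B)
    (hB1 : ∀ i z, |pd i f z| ≤ B) (hB2 : ∀ i z, |pd i (pd i f) z| ≤ B) (x : Plane) {s : ℝ}
    (hs : 0 < s) :
    HasDerivAt (gE f x) (gE (fun y => ∑ i, pd i (pd i f) y / 2) x s) s := by
  have hd : ∀ i, ContDiff ℝ 1 (pd i f) := fun i =>
    (hf.fderiv_right (m := 1) (by norm_num)).clm_apply contDiff_const
  have hc1 : ∀ i, Continuous (pd i f) := fun i => (hd i).continuous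
  have hc2 : ∀ i, Continuous (pd i (pd i f)) := fun i =>
    ((hd i).continuous_fderiv one_ne_zero).clm_apply continuous_const
  have hfc := hf.continuous
  have hB0 : 0 ≤ B := (abs_nonneg _).trans (hB 0)
  -- Near `s` the chain-rule factor `1 / (2√σ)` is at most `1 / (2√(s/2))`; Gaussian integration
  -- by parts then cancels the factor `1 / √s`.
  have hs2 : 0 < √(s / 2) := by positivity
  have key := (hasDerivAt_integral_of_dominated_loc_of_deriv_le (μ := (volume : Measure Plane))
    (F := fun s z => gd z * f (x + √s • z)) (x₀ := s) (s := Ioi (s / 2))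
    (F' := fun s z => gd z * ((1 / (2 * √s)) * ∑ i, z i * pd i f (x + √s • z)))
    (bound := fun z => (‖z‖ * gd z) * (1 / (2 * √(s / 2)) * (2 * B)))
    (Ioi_mem_nhds (by linarith)) (Eventually.of_forall fun s => by fun_prop)
    (integrable_gd_mul (by fun_prop) fun z => hB _) (by fun_prop)
    (Eventually.of_forall fun z σ hσ => ?_) (integrable_norm_mul_gd.mul_const _)
    (Eventually.of_forall fun z σ hσ => ?_)).2
  · refine key.congr_deriv ?_
    have hq : 0 < √s := by positivity
    have hst : ∀ i, ∫ z, gd z * z i * pd i f (x + √s • z) =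
        √s * ∫ z, gd z * pd i (pd i f) (x + √s • z) := by
      intro i
      have hpd : ∀ z, pd i (fun z => pd i f (x + √s • z)) z =
          √s * pd i (pd i f) (x + √s • z) := by
        intro z
        have h1 : HasFDerivAt (fun z : Plane => x + √s • z)
            (√s • ContinuousLinearMap.id ℝ Plane) z :=
          ((hasFDerivAt_id z).const_smul (√s)).const_add x
        have h2 := ((hd i).differentiable one_ne_zero (x + √s • z)).hasFDerivAt.comp z h1
        rw [pd, show (fun z => pd i f (x + √s • z)) = pd i f ∘ fun z => x + √s • z from rfl,
          h2.fderiv]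
        simp [pd]
      rw [stein (f := fun z => pd i f (x + √s • z)) (B := max B (√s * B)) ((hd i).comp (by fun_prop)) i
        (fun z => (hB1 i _).trans (le_max_left _ _)), ← integral_const_mul]
      · refine integral_congr_ae (Eventually.of_forall fun z => ?_)
        simp only [hpd]
        ring
      · intro z
        rw [hpd, abs_mul, abs_of_pos hq]
        exact (mul_le_mul_of_nonneg_left (hB2 i _) hq.le).trans (le_max_right _ _)
    have hi1 : ∀ i, Integrable fun z => gd z * z i * pd i f (x + √s • z) := fun i =>
      integrable_gd_coord_mul (f := fun z => pd i f (x + √s • z)) (by fun_prop)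
        (fun z => hB1 i _) i
    have hi2 : ∀ i, Integrable fun z => gd z * pd i (pd i f) (x + √s • z) := fun i =>
      integrable_gd_mul (f := fun z => pd i (pd i f) (x + √s • z)) (by fun_prop)
        (fun z => hB2 i _)
    calc ∫ z, gd z * ((1 / (2 * √s)) * ∑ i, z i * pd i f (x + √s • z))
        = ∫ z, (1 / (2 * √s)) * ∑ i, gd z * z i * pd i f (x + √s • z) := by
          refine integral_congr_ae (Eventually.of_forall fun z => ?_)
          simp only [Fin.sum_univ_two]
          ring
      _ = (1 / (2 * √s)) * ∑ i, √s * ∫ z, gd z * pd i (pd i f) (x + √s • z) := by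
          rw [integral_const_mul, integral_finsetSum _ fun i _ => hi1 i]
          simp only [hst]
      _ = ∫ z, (1 / 2) * ∑ i, gd z * pd i (pd i f) (x + √s • z) := by
          rw [integral_const_mul, integral_finsetSum _ fun i _ => hi2 i, ← Finset.mul_sum]
          field_simp
      _ = gE (fun y => ∑ i, pd i (pd i f) y / 2) x s := by
          unfold gE
          refine integral_congr_ae (Eventually.of_forall fun z => ?_)
          simp only [Fin.sum_univ_two]
          ring
  · have h1 : ‖∑ i, z i * pd i f (x + √σ • z)‖ ≤ ‖z‖ * (2 * B) := by
      refine (norm_sum_le _ _).trans ?_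
      have : ∀ i, ‖z i * pd i f (x + √σ • z)‖ ≤ ‖z‖ * B := fun i => by
        rw [norm_mul]
        exact mul_le_mul (PiLp.norm_apply_le z i) (hB1 i _) (norm_nonneg _) (norm_nonneg _)
      rw [Fin.sum_univ_two]
      linarith [this 0, this 1]
    have h2 : √(s / 2) ≤ √σ := Real.sqrt_le_sqrt (le_of_lt hσ)
    rw [norm_mul, norm_mul, Real.norm_of_nonneg (gd_pos z).le,
      Real.norm_of_nonneg (by positivity : 0 ≤ 1 / (2 * √σ))]
    have h3 : 1 / (2 * √σ) ≤ 1 / (2 * √(s / 2)) := by gcongr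
    calc gd z * (1 / (2 * √σ) * ‖∑ i, z i * pd i f (x + √σ • z)‖)
        ≤ gd z * (1 / (2 * √(s / 2)) * (‖z‖ * (2 * B))) := by
          have := (gd_pos z).le
          gcongr
      _ = _ := by ring
  · have hσ0 : 0 < σ := lt_trans (by positivity) hσ
    have h1 : HasDerivAt (fun σ => x + √σ • z) ((1 / (2 * √σ)) • z) σ :=
      ((Real.hasDerivAt_sqrt hσ0.ne').smul_const z).const_add x
    have h2 := ((hf.differentiable two_ne_zero) (x + √σ • z)).hasFDerivAt.comp_hasDerivAt σ h1
    refine (h2.const_mul (gd z)).congr_deriv ?_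
    rw [map_smul, fderiv_apply_eq_sum, smul_eq_mul]

/-! ### The comparison principle -/

/-- A stationary supersolution `½ΔV ≤ V²` satisfies the integrated inequality for the killed
heat semigroup. -/
lemma supersolution_killed {V : Plane → ℝ} (hV : ContDiff ℝ 2 V) {B : ℝ} (hB : ∀ z, |V z| ≤ B)
    (hB1 : ∀ i z, |pd i V z| ≤ B) (hB2 : ∀ i z, |pd i (pd i V) z| ≤ B) (h0 : ∀ z, 0 ≤ V z)
    (hsup : ∀ z, ∑ i, pd i (pd i V) z / 2 ≤ V z ^ 2) {C : ℝ} (hC : 0 ≤ C) {t : ℝ} (ht : 0 < t)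
    (x : Plane) :
    kf C t * heatP t (fun y => ENNReal.ofReal (V y)) x +
        ∫⁻ s in Ioo 0 t, ENNReal.ofReal C * kf C s * heatP s (fun y => ENNReal.ofReal (V y)) x ≤
      ENNReal.ofReal (V x) +
        ∫⁻ s in Ioo 0 t, kf C s * heatP s (fun y => ENNReal.ofReal (V y) ^ 2) x := by
  have hVc := hV.continuous
  have hc2 : ∀ i, Continuous (pd i (pd i V)) := fun i =>
    (((hV.fderiv_right (m := 1) (by norm_num)).clm_apply contDiff_const).continuous_fderiv
      one_ne_zero).clm_apply continuous_const
  have hV2 : ∀ z, |V z ^ 2| ≤ B ^ 2 := fun z => by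
    rw [abs_pow]; exact pow_le_pow_left₀ (abs_nonneg _) (hB z) 2
  have hP := continuous_gE hVc hB x
  have hP2 := continuous_gE (f := fun y => V y ^ 2) (by fun_prop) hV2 x
  have hL : ∀ s, gE (fun y => ∑ i, pd i (pd i V) y / 2) x s ≤ gE (fun y => V y ^ 2) x s := by
    intro s
    unfold gE
    refine integral_mono
      (integrable_gd_mul (f := fun z => ∑ i, pd i (pd i V) (x + √s • z) / 2) (B := B)
        (by fun_prop) fun z => ?_)
      (integrable_gd_mul (f := fun z => V (x + √s • z) ^ 2) (by fun_prop) fun z => hV2 _)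
      fun z => mul_le_mul_of_nonneg_left (hsup _) (gd_pos z).le
    have h1 := abs_le.1 (hB2 0 (x + √s • z))
    have h2 := abs_le.1 (hB2 1 (x + √s • z))
    rw [Fin.sum_univ_two, abs_le]
    constructor <;> linarith [h1.1, h1.2, h2.1, h2.2]
  have hexp : ∀ s, HasDerivAt (fun s => Real.exp (-C * s)) (-C * Real.exp (-C * s)) s := by
    intro s
    have h1 : HasDerivAt (fun s : ℝ => -C * s) (-C) s := by
      simpa using (hasDerivAt_id s).const_mul (-C)
    exact h1.exp.congr_deriv (by ring)
  have hmain := intervalIntegral.sub_le_integral_of_hasDeriv_right_of_le ht.le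
    (g := fun s => Real.exp (-C * s) * gE V x s)
    (g' := fun s => -C * Real.exp (-C * s) * gE V x s +
      Real.exp (-C * s) * gE (fun y => ∑ i, pd i (pd i V) y / 2) x s)
    (φ := fun s => Real.exp (-C * s) * gE (fun y => V y ^ 2) x s -
      C * Real.exp (-C * s) * gE V x s)
    (by fun_prop)
    (fun s hs => ((hexp s).mul (hasDerivAt_gE hV hB hB1 hB2 x hs.1)).hasDerivWithinAt)
    ((by fun_prop : Continuous _).integrableOn_Icc)
    (fun s hs => by
      have := mul_le_mul_of_nonneg_left (hL s) (Real.exp_pos (-C * s)).le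
      linarith)
  rw [intervalIntegral.integral_sub (Continuous.intervalIntegrable (by fun_prop) _ _)
    (Continuous.intervalIntegrable (by fun_prop) _ _)] at hmain
  simp only [mul_zero, Real.exp_zero, one_mul, gE_zero] at hmain
  have conv : ∀ F : ℝ → ℝ, Continuous F → (∀ s, 0 ≤ F s) →
      ∫⁻ s in Ioo 0 t, ENNReal.ofReal (F s) = ENNReal.ofReal (∫ s in (0 : ℝ)..t, F s) := by
    intro F hF hF0
    rw [intervalIntegral.integral_of_le ht.le, integral_Ioc_eq_integral_Ioo,
      ofReal_integral_eq_lintegral_ofReal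
        (hF.integrableOn_Icc.mono_set Ioo_subset_Icc_self) (Eventually.of_forall hF0)]
  have hn := gE_nonneg h0 x
  have hn2 := gE_nonneg (f := fun y => V y ^ 2) (fun z => sq_nonneg _) x
  have e1 : ∫⁻ s in Ioo 0 t, ENNReal.ofReal C * kf C s *
      heatP s (fun y => ENNReal.ofReal (V y)) x =
      ENNReal.ofReal (∫ s in (0 : ℝ)..t, C * Real.exp (-C * s) * gE V x s) := by
    rw [← conv _ (by fun_prop) fun s =>
      mul_nonneg (mul_nonneg hC (Real.exp_pos _).le) (hn s)]
    refine setLIntegral_congr_fun measurableSet_Ioo fun s hs => ?_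
    rw [heatP_ofReal hs.1 hVc hB h0, kf, ENNReal.ofReal_mul (by positivity),
      ENNReal.ofReal_mul hC]
  have e2 : ∫⁻ s in Ioo 0 t, kf C s * heatP s (fun y => ENNReal.ofReal (V y) ^ 2) x =
      ENNReal.ofReal (∫ s in (0 : ℝ)..t, Real.exp (-C * s) * gE (fun y => V y ^ 2) x s) := by
    rw [← conv _ (by fun_prop) fun s => mul_nonneg (Real.exp_pos _).le (hn2 s)]
    refine setLIntegral_congr_fun measurableSet_Ioo fun s hs => ?_
    rw [ENNReal.ofReal_mul (by positivity), ← heatP_ofReal hs.1 (by fun_prop) hV2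
      (fun z => sq_nonneg _), kf]
    simp only [ENNReal.ofReal_pow (h0 _)]
  have hi : ∀ F : ℝ → ℝ, (∀ s, 0 ≤ F s) → 0 ≤ ∫ s in (0 : ℝ)..t, F s := fun F hF =>
    intervalIntegral.integral_nonneg ht.le fun s _ => hF s
  rw [e1, e2, heatP_ofReal ht hVc hB h0, kf, ← ENNReal.ofReal_mul (by positivity),
    ← ENNReal.ofReal_add (mul_nonneg (Real.exp_pos _).le (hn t))
      (hi _ fun s => mul_nonneg (mul_nonneg hC (Real.exp_pos _).le) (hn s)),
    ← ENNReal.ofReal_add (h0 x) (hi _ fun s => mul_nonneg (Real.exp_pos _).le (hn2 s))]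
  exact ENNReal.ofReal_le_ofReal (by linarith)

/-- Linearisation of the nonlinearity `a ↦ a²` on `a + b ≤ C`. -/
lemma reaction_le {a b C : ℝ} (ha : 0 ≤ a) (hb : 0 ≤ b) (hab : a + b ≤ C) :
    ENNReal.ofReal C * ENNReal.ofReal a + ENNReal.ofReal b ^ 2 ≤
      ENNReal.ofReal a ^ 2 + ENNReal.ofReal C * ENNReal.ofReal b +
        ENNReal.ofReal C * ENNReal.ofReal (a - b) := by
  have hC : 0 ≤ C := by linarith
  have hm : ENNReal.ofReal (a - b) = ENNReal.ofReal (max (a - b) 0) := by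
    rw [ENNReal.ofReal_max]; simp
  rw [hm, ← ENNReal.ofReal_pow ha, ← ENNReal.ofReal_pow hb, ← ENNReal.ofReal_mul hC,
    ← ENNReal.ofReal_mul hC, ← ENNReal.ofReal_mul hC, ← ENNReal.ofReal_add (by positivity)
    (by positivity), ← ENNReal.ofReal_add (by positivity) (by positivity),
    ← ENNReal.ofReal_add (by positivity) (by positivity)]
  apply ENNReal.ofReal_le_ofReal
  rcases le_total a b with h | h
  · rw [max_eq_right (by linarith)]; nlinarith
  · rw [max_eq_left (by linarith)]; nlinarith

/-- Comparison principle: a mild solution stays below a smooth bounded stationary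
supersolution dominating its initial data. -/
lemma mild_le_supersolution {φ : Plane → ℝ} {u : ℝ → Plane → ℝ} (hu : IsMildSolution 2 φ u)
    (hφm : Measurable φ) {N : ℝ} (hφN : ∀ x, φ x ≤ N)
    {V : Plane → ℝ} (hV : ContDiff ℝ 2 V) {B : ℝ} (hB : ∀ z, |V z| ≤ B)
    (hB1 : ∀ i z, |pd i V z| ≤ B) (hB2 : ∀ i z, |pd i (pd i V) z| ≤ B) (h0 : ∀ z, 0 ≤ V z)
    (hsup : ∀ z, ∑ i, pd i (pd i V) z / 2 ≤ V z ^ 2) (hφV : ∀ x, φ x ≤ V x)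
    {T : ℝ} (hT : 0 < T) (x : Plane) : u T x ≤ V x := by
  obtain ⟨hum, hu0, hmild⟩ := hu
  have hVm : Measurable V := hV.continuous.measurable
  have hum' : Measurable fun q : ℝ × Plane => u q.1 q.2 := hum
  have hucomp : ∀ {α : Type} [MeasurableSpace α] {a : α → ℝ} {b : α → Plane}, Measurable a →
      Measurable b → Measurable fun z => u (a z) (b z) := fun ha hb => hum'.comp (ha.prodMk hb)
  set U : ℝ → Plane → ℝ≥0∞ := fun t x => ENNReal.ofReal (u t x) with hU
  set v : Plane → ℝ≥0∞ := fun x => ENNReal.ofReal (V x) with hv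
  set Φ : Plane → ℝ≥0∞ := fun x => ENNReal.ofReal (φ x) with hΦ
  set D : ℝ → Plane → ℝ≥0∞ := fun t x => ENNReal.ofReal (u t x - V x) with hD
  have hmild' : ∀ t x, 0 < t →
      U t x + ∫⁻ s in Ioo 0 t, heatP s (fun y => U (t - s) y ^ 2) x = heatP t Φ x := by
    intro t x ht
    have h := hmild t x ht
    have e1 : heatP t Φ x = ∫⁻ y, ENNReal.ofReal (heatKernel 2 t x y * φ y) := by
      refine lintegral_congr fun y => ?_
      rw [ENNReal.ofReal_mul (heatKernel_nonneg_s16 ht _ _), pk]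
    rw [e1, ← h]
    congr 1
    refine setLIntegral_congr_fun measurableSet_Ioo fun s hs => lintegral_congr fun y => ?_
    rw [ENNReal.ofReal_mul (heatKernel_nonneg_s16 hs.1 _ _), pk, ENNReal.ofReal_pow (hu0 _ _)]
  have hPΦ : ∀ t x, 0 < t → heatP t Φ x ≤ ENNReal.ofReal N := fun t x ht =>
    (heatP_mono t (fun y => ENNReal.ofReal_le_ofReal (hφN y)) x).trans (heatP_const ht _ x).le
  have hUN : ∀ t x, 0 < t → U t x ≤ ENNReal.ofReal (max N 0) := fun t x ht =>
    (le_self_add.trans (hmild' t x ht).le).trans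
      ((hPΦ t x ht).trans (ENNReal.ofReal_le_ofReal (le_max_left _ _)))
  have huN : ∀ t x, 0 < t → u t x ≤ max N 0 := fun t x ht =>
    (ENNReal.ofReal_le_ofReal_iff (le_max_right _ _)).1 (hUN t x ht)
  have hB0 : 0 ≤ B := (abs_nonneg _).trans (hB 0)
  set C : ℝ := max N 0 + B with hCdef
  have hC : 0 ≤ C := add_nonneg (le_max_right _ _) hB0
  have hUC : ∀ t x, 0 < t → U t x ≤ ENNReal.ofReal C := fun t x ht =>
    (hUN t x ht).trans (ENNReal.ofReal_le_ofReal (by linarith))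
  have hvC : ∀ x, v x ≤ ENNReal.ofReal C := fun x =>
    ENNReal.ofReal_le_ofReal (by
      have := le_of_abs_le (hB x)
      have := le_max_right N 0
      linarith)
  set S : ℝ≥0∞ := ⨆ t : Ioc 0 T, ⨆ x, D t x with hS
  set θ : ℝ≥0∞ := ENNReal.ofReal (1 - Real.exp (-C * T)) with hθ
  have hSC : S ≤ ENNReal.ofReal C := by
    refine iSup_le fun t => iSup_le fun x => ?_
    refine (ENNReal.ofReal_le_ofReal ?_).trans (hUC t x t.2.1)
    linarith [h0 x]
  have hkfC : ∀ t, 0 < t → ∫⁻ s in Ioo 0 t, ENNReal.ofReal C * kf C s ≤ 1 := fun t ht =>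
    le_self_add.trans (lintegral_kf_add hC ht.le).le
  -- An upper bound for `u - V` on `(0,T]` improves by the factor `θ = 1 - e^{-CT} < 1`.
  have step : ∀ t ∈ Ioc 0 T, ∀ x, D t x ≤ θ * S := by
    intro t ht x
    have hUm : ∀ s, Measurable (U (t - s)) := fun s => by
      exact (hucomp (by fun_prop) (by fun_prop)).ennreal_ofReal
    have mU : Measurable fun s => heatP s (U (t - s)) x := by
      apply measurable_heatP_comp (by fun_prop) (by fun_prop)
      exact (hucomp (by fun_prop) (by fun_prop)).ennreal_ofReal
    have mU2 : Measurable fun s => heatP s (fun y => U (t - s) y ^ 2) x := by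
      apply measurable_heatP_comp (by fun_prop) (by fun_prop)
      exact (hucomp (by fun_prop) (by fun_prop)).ennreal_ofReal.pow_const 2
    have vm : Measurable v := hVm.ennreal_ofReal
    have mv : Measurable fun s => heatP s v x := by
      apply measurable_heatP_comp (by fun_prop) (by fun_prop)
      exact vm.comp measurable_snd
    have hk := killed_duhamel (U := U) (W := fun t y => U t y ^ 2) (Φ := Φ)
      hum'.ennreal_ofReal (hum'.ennreal_ofReal.pow_const 2) hφm.ennreal_ofReal hC hmild' ht.1 x
      (ne_top_of_le_ne_top ENNReal.ofReal_ne_top (hPΦ t x ht.1))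
    have hs := supersolution_killed hV hB hB1 hB2 h0 hsup hC ht.1 x
    have hΦv : heatP t Φ x ≤ heatP t v x :=
      heatP_mono t (fun y => ENNReal.ofReal_le_ofReal (hφV y)) x
    set IU2 := ∫⁻ s in Ioo 0 t, kf C s * heatP s (fun y => U (t - s) y ^ 2) x with hIU2
    set IU := ∫⁻ s in Ioo 0 t, ENNReal.ofReal C * kf C s * heatP s (U (t - s)) x with hIU
    set Iv := ∫⁻ s in Ioo 0 t, ENNReal.ofReal C * kf C s * heatP s v x with hIv
    set Iv2 := ∫⁻ s in Ioo 0 t, kf C s * heatP s (fun y => v y ^ 2) x with hIv2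
    have bound : ∀ {F : ℝ → ℝ≥0∞}, (∀ s ∈ Ioo 0 t, F s ≤ ENNReal.ofReal C) →
        ∫⁻ s in Ioo 0 t, ENNReal.ofReal C * kf C s * F s ≤ ENNReal.ofReal C := by
      intro F hF
      calc ∫⁻ s in Ioo 0 t, ENNReal.ofReal C * kf C s * F s
          ≤ ∫⁻ s in Ioo 0 t, ENNReal.ofReal C * kf C s * ENNReal.ofReal C :=
            setLIntegral_mono' measurableSet_Ioo fun s hs => mul_le_mul_right (hF s hs) _
        _ ≤ 1 * ENNReal.ofReal C := by
            rw [lintegral_mul_const _ (by fun_prop)]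
            exact mul_le_mul_left (hkfC t ht.1) _
        _ = _ := one_mul _
    have hIUfin : IU ≠ ⊤ := ne_top_of_le_ne_top ENNReal.ofReal_ne_top (bound fun s hs =>
      (lintegral_mono fun y => mul_le_mul_right (hUC _ y (by linarith [hs.2])) _).trans
        (heatP_const hs.1 _ x).le)
    have hIvfin : Iv ≠ ⊤ := ne_top_of_le_ne_top ENNReal.ofReal_ne_top (bound fun s hs =>
      (heatP_mono s hvC x).trans (heatP_const hs.1 _ x).le)
    have hPvfin : kf C t * heatP t v x ≠ ⊤ := ENNReal.mul_ne_top (kf_ne_top _ _)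
      (ne_top_of_le_ne_top ENNReal.ofReal_ne_top
        ((heatP_mono t hvC x).trans (heatP_const ht.1 _ x).le))
    have hIU2fin : IU2 ≠ ⊤ := by
      refine ne_top_of_le_ne_top (ENNReal.add_ne_top.2 ⟨?_, hIUfin⟩) (le_add_self.trans hk.le)
      exact ne_top_of_le_ne_top hPvfin (mul_le_mul_right hΦv _)
    have hreact : IU + Iv2 ≤ IU2 + Iv + θ * S := by
      have hθS : θ * S ≥ ∫⁻ s in Ioo 0 t, ENNReal.ofReal C * kf C s * S := by
        rw [lintegral_mul_const _ (by fun_prop), lintegral_kf hC ht.1.le]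
        refine mul_le_mul_left (ENNReal.ofReal_le_ofReal ?_) _
        have : Real.exp (-C * T) ≤ Real.exp (-C * t) :=
          Real.exp_le_exp.2 (by nlinarith [ht.2])
        linarith
      refine le_trans ?_ (add_le_add le_rfl hθS)
      rw [hIU, hIv2, hIU2, hIv, ← lintegral_add_left (by fun_prop),
        ← lintegral_add_left (by fun_prop), ← lintegral_add_left (by fun_prop)]
      refine setLIntegral_mono' measurableSet_Ioo fun s hs => ?_
      have hts : t - s ∈ Ioc 0 T := ⟨by linarith [hs.2], by linarith [hs.1, ht.2]⟩
      have h1 : heatP s (fun y => ENNReal.ofReal C * U (t - s) y + v y ^ 2) x ≤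
          heatP s (fun y => U (t - s) y ^ 2 + ENNReal.ofReal C * v y + ENNReal.ofReal C * S) x := by
        refine heatP_mono s (fun y => (reaction_le (hu0 _ _) (h0 y) ?_).trans ?_) x
        · have := huN (t - s) y hts.1
          have := le_of_abs_le (hB y)
          linarith
        · gcongr
          exact (le_iSup (fun x => D (t - s) x) y).trans
            (le_iSup (fun t : Ioc 0 T => ⨆ x, D t x) ⟨t - s, hts⟩)
      have hcm : ∀ {f : Plane → ℝ≥0∞}, Measurable f →
          heatP s (fun y => ENNReal.ofReal C * f y) x = ENNReal.ofReal C * heatP s f x := by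
        intro f hf
        unfold heatP
        rw [← lintegral_const_mul _ (by fun_prop)]
        refine lintegral_congr fun y => ?_
        ring
      rw [heatP_add s ((hUm s).const_mul _), heatP_add s (by have := hUm s; fun_prop),
        heatP_add s ((hUm s).pow_const 2), heatP_const hs.1, hcm (hUm s), hcm vm] at h1
      have h2 := mul_le_mul_right h1 (kf C s)
      calc _ = kf C s * (ENNReal.ofReal C * heatP s (U (t - s)) x +
            heatP s (fun y => v y ^ 2) x) := by ring
        _ ≤ _ := h2
        _ = _ := by ring
    -- Adding the two Duhamel relations; the bracketed terms are finite and cancel.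
    have htot : U t x + (IU2 + Iv + kf C t * heatP t v x) ≤
        (v x + θ * S) + (IU2 + Iv + kf C t * heatP t v x) := by
      calc U t x + (IU2 + Iv + kf C t * heatP t v x)
          = (U t x + IU2) + (kf C t * heatP t v x + Iv) := by ring
        _ ≤ (kf C t * heatP t v x + IU) + (v x + Iv2) := by
            rw [hk]
            gcongr
        _ = v x + kf C t * heatP t v x + (IU + Iv2) := by ring
        _ ≤ v x + kf C t * heatP t v x + (IU2 + Iv + θ * S) := by gcongr
        _ = _ := by ring
    have hcancel : U t x ≤ v x + θ * S :=
      (ENNReal.add_le_add_iff_right (by simp [hIU2fin, hIvfin, hPvfin])).1 htot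
    have : D t x = U t x - v x := ENNReal.ofReal_sub _ (h0 x)
    rw [this]
    exact tsub_le_iff_left.2 hcancel
  have hS0 : S = 0 := by
    have h1 : S ≤ θ * S := iSup_le fun t => iSup_le fun x => step t t.2 x
    have hθ1 : θ < 1 := by
      rw [hθ, ENNReal.ofReal_lt_one]
      linarith [Real.exp_pos (-C * T)]
    by_contra hne
    have h2 : θ * S < 1 * S :=
      (ENNReal.mul_lt_mul_iff_left hne (ne_top_of_le_ne_top ENNReal.ofReal_ne_top hSC)).2 hθ1
    rw [one_mul] at h2
    exact absurd h1 (not_le.2 h2)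
  have hfin := step T ⟨hT, le_rfl⟩ x
  rw [hS0, mul_zero] at hfin
  have := ENNReal.ofReal_eq_zero.1 (le_zero_iff.1 hfin)
  linarith

/-! ### The barriers -/

lemma pd_inv_pow {h : Plane → ℝ} {x : Plane} (hd : DifferentiableAt ℝ h x) (hx : h x ≠ 0)
    (m : ℕ) (i : Fin 2) :
    pd i (fun y => (h y ^ (m + 1))⁻¹) x = -((m + 1 : ℕ) : ℝ) * (h x ^ (m + 2))⁻¹ * pd i h x := by
  have h1 := ((hasDerivAt_pow (m + 1) (h x)).inv (pow_ne_zero _ hx)).comp_hasFDerivAt x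
    hd.hasFDerivAt
  have h2 : fderiv ℝ (fun y => (h y ^ (m + 1))⁻¹) x = _ := h1.fderiv
  rw [pd, h2]
  simp only [_root_.smul_apply, smul_eq_mul, pd, Nat.add_sub_cancel]
  field_simp
  ring

/-- The barriers: `V = K (1/n + 1 - f)⁻²` for a smooth cutoff `f` equal to `1` on `B(r')` and
vanishing outside `B(r)`. The same `K` serves for all `n`. -/
lemma exists_barrier {r' r : ℝ} (hr' : 0 < r') (hrr : r' < r) :
    ∃ K : ℝ, ∀ n : ℕ, 1 ≤ n → ∃ (V : Plane → ℝ) (B : ℝ), ContDiff ℝ 2 V ∧ (∀ z, |V z| ≤ B) ∧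
      (∀ i z, |pd i V z| ≤ B) ∧ (∀ i z, |pd i (pd i V) z| ≤ B) ∧ (∀ z, 0 ≤ V z) ∧
      (∀ z, ∑ i, pd i (pd i V) z / 2 ≤ V z ^ 2) ∧ (∀ z ∈ ball (0 : Plane) r', (n : ℝ) ≤ V z) ∧
      ∀ z, r ≤ ‖z‖ → V z ≤ K := by
  let f : ContDiffBump (0 : Plane) := ⟨r', r, hr', hrr⟩
  have hf : ∀ {k : ℕ∞}, ContDiff ℝ k f := f.contDiff
  have hpf : ∀ i, ContDiff ℝ 1 (pd i f) := fun i =>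
    ((hf (k := 2)).fderiv_right (m := 1) (by norm_num)).clm_apply contDiff_const
  have hcs : ∀ i, HasCompactSupport (pd i f) := fun i =>
    f.hasCompactSupport.fderiv_apply ℝ (eb i)
  have hcs2 : ∀ i, HasCompactSupport (pd i (pd i f)) := fun i =>
    (hcs i).fderiv_apply ℝ (eb i)
  have hcont2 : ∀ i, Continuous (pd i (pd i f)) := fun i =>
    ((hpf i).continuous_fderiv one_ne_zero).clm_apply continuous_const
  choose A1 hA1 using fun i => (hpf i).continuous.bounded_above_of_compact_support (hcs i)
  choose A2 hA2 using fun i => (hcont2 i).bounded_above_of_compact_support (hcs2 i)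
  obtain ⟨A, hA⟩ : ∃ A, ∀ i, A1 i ≤ A ∧ A2 i ≤ A :=
    ⟨∑ i, (|A1 i| + |A2 i|), fun i => by
      have := Finset.single_le_sum (f := fun i => |A1 i| + |A2 i|)
        (fun i _ => by positivity) (Finset.mem_univ i)
      have h1 := le_abs_self (A1 i)
      have h2 := le_abs_self (A2 i)
      have h3 := abs_nonneg (A1 i)
      have h4 := abs_nonneg (A2 i)
      constructor <;> linarith⟩
  have hA1' : ∀ i z, |pd i f z| ≤ A := fun i z => (hA1 i z).trans (hA i).1
  have hA2' : ∀ i z, |pd i (pd i f) z| ≤ A := fun i z => (hA2 i z).trans (hA i).2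
  have hA0 : 0 ≤ A := (abs_nonneg _).trans (hA1' 0 0)
  -- With `h = 1/n + 1 - f ≤ 2` and `V = K h⁻²`, the inequality `½ΔV ≤ V²` reads
  -- `3|∇h|² - hΔh ≤ K`, and the left side is at most `6A² + 4A`.
  set K : ℝ := 6 * A ^ 2 + 4 * A + 1 with hK
  have hK1 : 1 ≤ K := by nlinarith
  refine ⟨K, fun n hn => ?_⟩
  have hn1 : (1 : ℝ) ≤ n := by exact_mod_cast hn
  set ε : ℝ := (n : ℝ)⁻¹ with hε
  have hε0 : 0 < ε := by positivity
  have hε1 : ε ≤ 1 := inv_le_one_of_one_le₀ hn1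
  set h : Plane → ℝ := fun z => ε + 1 - f z with hh
  have hhC : ContDiff ℝ 2 h := contDiff_const.sub (hf (k := 2))
  have hhd : Differentiable ℝ h := hhC.differentiable two_ne_zero
  have hhε : ∀ z, ε ≤ h z := fun z => by have := f.le_one (x := z); simp only [hh]; linarith
  have hh0 : ∀ z, 0 < h z := fun z => hε0.trans_le (hhε z)
  have hh2 : ∀ z, h z ≤ 2 := fun z => by have := f.nonneg (x := z); simp only [hh]; linarith
  have hph : ∀ i, pd i h = fun z => -pd i f z := fun i => by
    ext z
    simp only [pd, hh, fderiv_const_sub]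
    simp
  have hpph : ∀ i z, pd i (pd i h) z = -pd i (pd i f) z := fun i z => by
    rw [hph, pd, fderiv_fun_neg]
    rfl
  have hphd : ∀ i, Differentiable ℝ (pd i h) := fun i => by
    rw [hph]; exact ((hpf i).differentiable one_ne_zero).neg
  have hb1 : ∀ i z, |pd i h z| ≤ A := fun i z => by rw [hph, abs_neg]; exact hA1' i z
  have hb2 : ∀ i z, |pd i (pd i h) z| ≤ A := fun i z => by rw [hpph, abs_neg]; exact hA2' i z
  set V : Plane → ℝ := fun z => K * (h z ^ 2)⁻¹ with hVdef
  have hinv : ∀ (k : ℕ) z, (h z ^ k)⁻¹ ≤ (ε ^ k)⁻¹ := fun k z => by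
    have := hhε z
    gcongr
  have hinv0 : ∀ (k : ℕ) z, 0 < (h z ^ k)⁻¹ := fun k z => inv_pos.2 (pow_pos (hh0 z) k)
  have hdinv : ∀ (k : ℕ), Differentiable ℝ fun z => (h z ^ k)⁻¹ := fun k =>
    (hhd.pow k).inv fun z => (pow_pos (hh0 z) k).ne'
  have hV1 : ∀ i, pd i V = fun z => -2 * K * ((h z ^ 3)⁻¹ * pd i h z) := fun i => by
    ext z
    have e := pd_inv_pow (hhd z) (hh0 z).ne' 1 i
    have : pd i V z = K * pd i (fun y => (h y ^ (1 + 1))⁻¹) z := by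
      simp only [pd, hVdef]
      rw [fderiv_const_mul (hdinv 2 z)]
      simp
    rw [this, e]
    push_cast
    ring
  have hV2 : ∀ i z, pd i (pd i V) z =
      6 * K * ((h z ^ 4)⁻¹ * pd i h z ^ 2) - 2 * K * ((h z ^ 3)⁻¹ * pd i (pd i h) z) := by
    intro i z
    have e := pd_inv_pow (hhd z) (hh0 z).ne' 2 i
    rw [hV1]
    have : pd i (fun z => -2 * K * ((h z ^ 3)⁻¹ * pd i h z)) z = -2 * K *
        ((h z ^ 3)⁻¹ * pd i (pd i h) z + pd i h z * pd i (fun y => (h y ^ (2 + 1))⁻¹) z) := by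
      conv_lhs => rw [pd]
      have hm : DifferentiableAt ℝ (fun y => (h y ^ 3)⁻¹ * pd i h y) z :=
        (hdinv 3 z).mul (hphd i z)
      rw [fderiv_const_mul hm, fderiv_fun_mul (hdinv 3 z) (hphd i z)]
      simp [pd]
      ring
    rw [this, e]
    push_cast
    ring
  have hsq : ∀ i z, pd i h z ^ 2 ≤ A ^ 2 := fun i z =>
    sq_le_sq' (abs_le.1 (hb1 i z)).1 (abs_le.1 (hb1 i z)).2
  refine ⟨V, K * (ε ^ 2)⁻¹ + 2 * K * ((ε ^ 3)⁻¹ * A) +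
    (6 * K * ((ε ^ 4)⁻¹ * A ^ 2) + 2 * K * ((ε ^ 3)⁻¹ * A)), ?_, ?_, ?_, ?_, ?_, ?_, ?_, ?_⟩
  · exact contDiff_const.mul ((hhC.pow 2).inv fun z => (pow_pos (hh0 z) 2).ne')
  · intro z
    have h1 : |V z| ≤ K * (ε ^ 2)⁻¹ := by
      simp only [hVdef]
      rw [abs_of_nonneg (by have := hinv0 2 z; positivity)]
      exact mul_le_mul_of_nonneg_left (hinv 2 z) (by linarith)
    have : 0 ≤ 2 * K * ((ε ^ 3)⁻¹ * A) + (6 * K * ((ε ^ 4)⁻¹ * A ^ 2) + 2 * K * ((ε ^ 3)⁻¹ * A)) := by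
      positivity
    linarith
  · intro i z
    have h1 : |pd i V z| ≤ 2 * K * ((ε ^ 3)⁻¹ * A) := by
      rw [hV1, abs_mul, abs_mul, abs_mul, abs_of_pos (hinv0 3 z), abs_of_pos (by linarith : 0 < K)]
      have := hinv 3 z
      have := hb1 i z
      norm_num
      gcongr
    have : 0 ≤ K * (ε ^ 2)⁻¹ + (6 * K * ((ε ^ 4)⁻¹ * A ^ 2) + 2 * K * ((ε ^ 3)⁻¹ * A)) := by
      positivity
    linarith
  · intro i z
    have h1 : |pd i (pd i V) z| ≤
        6 * K * ((ε ^ 4)⁻¹ * A ^ 2) + 2 * K * ((ε ^ 3)⁻¹ * A) := by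
      rw [hV2]
      refine (abs_sub _ _).trans (add_le_add ?_ ?_)
      · rw [abs_of_nonneg (by have := hinv0 4 z; positivity)]
        have := hinv 4 z
        have := hsq i z
        gcongr
      · rw [abs_mul, abs_mul _ (pd i (pd i h) z), abs_of_pos (hinv0 3 z),
          abs_of_pos (by linarith : 0 < 2 * K)]
        have := hinv 3 z
        have := hb2 i z
        gcongr
    have : 0 ≤ K * (ε ^ 2)⁻¹ + 2 * K * ((ε ^ 3)⁻¹ * A) := by positivity
    linarith
  · intro z
    have := hinv0 2 z
    simp only [hVdef]
    positivity
  · intro z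
    have hi : ∀ i, pd i (pd i V) z / 2 ≤ K * (h z ^ 4)⁻¹ * (3 * A ^ 2 + 2 * A) := by
      intro i
      have e3 : (h z ^ 3)⁻¹ = (h z ^ 4)⁻¹ * h z := by
        have := (hh0 z).ne'
        field_simp
      have e4 : pd i (pd i V) z / 2 =
          K * (h z ^ 4)⁻¹ * (3 * pd i h z ^ 2 + h z * (-pd i (pd i h) z)) := by
        rw [hV2, e3]; ring
      rw [e4]
      have h1 := hinv0 4 z
      have h2 := hsq i z
      have h3 : h z * (-pd i (pd i h) z) ≤ 2 * A :=
        (mul_le_mul_of_nonneg_left ((neg_le_abs _).trans (hb2 i z)) (hh0 z).le).trans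
          (mul_le_mul_of_nonneg_right (hh2 z) hA0)
      gcongr
    have e5 : V z ^ 2 = K * (h z ^ 4)⁻¹ * K := by
      simp only [hVdef]; rw [mul_pow, inv_pow, ← pow_mul]; ring
    rw [Fin.sum_univ_two, e5]
    have h1 : 0 < K * (h z ^ 4)⁻¹ := mul_pos (by linarith) (hinv0 4 z)
    have h2 : K * (h z ^ 4)⁻¹ * (6 * A ^ 2 + 4 * A) ≤ K * (h z ^ 4)⁻¹ * K :=
      mul_le_mul_of_nonneg_left (by linarith) h1.le
    linarith [hi 0, hi 1]
  · intro z hz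
    have hfz : f z = 1 := f.one_of_mem_closedBall (ball_subset_closedBall hz)
    have : V z = K * (n : ℝ) ^ 2 := by
      simp only [hVdef, hh, hfz, hε]
      simp
    rw [this]
    nlinarith
  · intro z hz
    have hfz : f z = 0 := f.zero_of_le_dist (by simpa using hz)
    simp only [hVdef, hh, hfz, sub_zero]
    have : ((ε + 1) ^ 2)⁻¹ ≤ 1 := inv_le_one_of_one_le₀ (by nlinarith)
    nlinarith

/-- in `d = 2`, the function `u(t,x) = sup_{n≥1} u_n(t,x)`, where `u_n`
solves the equation with data `n·1_{B(r')}`, is bounded on `{t > 0, ‖x‖ ≥ r}` for `r > r'`. -/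
theorem stmt_16 (r' r : ℝ) (hr' : 0 < r') (hrr : r' < r)
    (u : ℕ → ℝ → EuclideanSpace ℝ (Fin 2) → ℝ)
    (hu : ∀ n : ℕ, 1 ≤ n →
      IsMildSolution 2
        ((Metric.ball (0 : EuclideanSpace ℝ (Fin 2)) r').indicator fun _ => (n : ℝ))
        (u n)) :
    ∃ M : ℝ, ∀ t : ℝ, 0 < t → ∀ x : EuclideanSpace ℝ (Fin 2), r ≤ ‖x‖ →
      (⨆ n : ℕ, u (n + 1) t x) ≤ M := by
  obtain ⟨K, hK⟩ := exists_barrier hr' hrr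
  refine ⟨K, fun t ht x hx => ciSup_le fun m => ?_⟩
  obtain ⟨V, B, hV, hB, hB1, hB2, h0, hsup, hball, hout⟩ := hK (m + 1) (by omega)
  refine (mild_le_supersolution (hu (m + 1) (by omega))
    (measurable_const.indicator measurableSet_ball) (N := ((m + 1 : ℕ) : ℝ)) (fun z => ?_)
    hV hB hB1 hB2 h0 hsup (fun z => ?_) ht x).trans (hout x hx)
  · exact indicator_le_self' (fun _ _ => by positivity) z
  · by_cases hz : z ∈ ball (0 : Plane) r'
    · rw [indicator_of_mem hz]; exact hball z hz
    · rw [indicator_of_notMem hz]; exact h0 z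
end
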